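/- Suppose L is a metric flag labeled triangulation of the 2-sphere. Let D be a Seifert subcomplex of L and let C ⊆ D be a Euclidean 4-circuit with vertices s₀, s₁, s₂, s₃ in cyclic order. If v is a vertex of L joined to both opposite corners s₀ and s₂ by edges of L labeled 2, then v is a vertex of D. -/

import Mathlib

open Geometry

/-- The ambient space for our simplicial complexes. -/
abbrev E3 : Type := EuclideanSpace ℝ (Fin 3)

noncomputable instance : DecidableEq E3 := Classical.decEq _

namespace CoxOrb

variable (L : SimplicialComplex ℝ E3) (m : E3 → E3 → ℕ)

/-- `L` is a labeled triangulation of the 2-sphere with edge labeling `m`: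
`L` is finite, its underlying space is homeomorphic to the 2-sphere, and `m`
is symmetric with `m s t ≥ 2` on every edge `{s, t}` of `L`. -/
structure IsLabeledS2 : Prop where
  finite : L.faces.Finite
  sphere : Nonempty (L.space ≃ₜ (Metric.sphere (0 : E3) 1 : Set E3))
  symm : ∀ s t : E3, m s t = m t s
  two_le : ∀ s t : E3, s ≠ t → ({s, t} : Finset E3) ∈ L.faces → 2 ≤ m s t

/-- `L` with labeling `m` is metric flag: three pairwise-joined vertices span a
2-simplex iff the corresponding angle sum `π/m_st + π/m_tu + π/m_us` exceeds `π`. -/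
def MetricFlag : Prop :=
  ∀ s t u : E3, s ≠ t → t ≠ u → s ≠ u →
    ({s, t} : Finset E3) ∈ L.faces → ({t, u} : Finset E3) ∈ L.faces →
    ({s, u} : Finset E3) ∈ L.faces →
    (({s, t, u} : Finset E3) ∈ L.faces ↔
      1 / (m s t : ℝ) + 1 / (m t u : ℝ) + 1 / (m u s : ℝ) > 1)

/-- The link of a vertex `s`, as a set of faces of `L`. -/
def link (s : E3) : Set (Finset E3) :=
  {F | F ∈ L.faces ∧ s ∉ F ∧ insert s F ∈ L.faces}

/-- The closed star of a vertex `s`: all faces of `L` contained in some face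
containing `s`. -/
def star (s : E3) : Set (Finset E3) :=
  {F | F ∈ L.faces ∧ ∃ G ∈ L.faces, s ∈ G ∧ F ⊆ G}

/-- The vertices of the link of `s`. -/
def linkVerts (s : E3) : Set E3 :=
  {v | v ≠ s ∧ ({s, v} : Finset E3) ∈ L.faces}

/-- A set of faces `A` is a full subcomplex of `L`: every face of `L` all of
whose vertices are vertices of `A` belongs to `A`. -/
def IsFullSubcomplex (A : Set (Finset E3)) : Prop :=
  A ⊆ L.faces ∧ ∀ F ∈ L.faces, (∀ v ∈ F, ({v} : Finset E3) ∈ A) → F ∈ A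

/-- `s` is a 3-Euclidean vertex of `L`: it has valence three and the labels on
the three edges of its link have reciprocals summing to one. -/
def IsThreeEuclidean (s : E3) : Prop :=
  ({s} : Finset E3) ∈ L.faces ∧
  ∃ s₀ s₁ s₂ : E3, s₀ ≠ s₁ ∧ s₁ ≠ s₂ ∧ s₀ ≠ s₂ ∧
    linkVerts L s = {s₀, s₁, s₂} ∧
    1 / (m s₀ s₁ : ℝ) + 1 / (m s₁ s₂ : ℝ) + 1 / (m s₂ s₀ : ℝ) = 1

/-- `s` is a 4-Euclidean vertex of `L`: it has valence four, its link is the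
4-circuit on `v 0, v 1, v 2, v 3` (in cyclic order), and the labels on the
edges of the link are all `2`. -/
def IsFourEuclidean (s : E3) : Prop :=
  ({s} : Finset E3) ∈ L.faces ∧
  ∃ v : Fin 4 → E3, Function.Injective v ∧
    linkVerts L s = {v 0, v 1, v 2, v 3} ∧
    (∀ i : Fin 4, ({s, v i, v (i + 1)} : Finset E3) ∈ L.faces) ∧
    (∀ i : Fin 4, m (v i) (v (i + 1)) = 2)

/-- `L` is the boundary complex of a 3-simplex: four pairwise-joined vertices
spanning four 2-simplices. -/
def IsBoundaryOfThreeSimplex : Prop :=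
  ∃ a b c d : E3, a ≠ b ∧ a ≠ c ∧ a ≠ d ∧ b ≠ c ∧ b ≠ d ∧ c ≠ d ∧
    (∀ v : E3, ({v} : Finset E3) ∈ L.faces ↔ v = a ∨ v = b ∨ v = c ∨ v = d) ∧
    ({a, b, c} : Finset E3) ∈ L.faces ∧ ({a, b, d} : Finset E3) ∈ L.faces ∧
    ({a, c, d} : Finset E3) ∈ L.faces ∧ ({b, c, d} : Finset E3) ∈ L.faces

/-- `L` is the suspension of a 3-gon. -/
def IsSuspensionOfThreeGon : Prop :=
  ∃ t t' s₀ s₁ s₂ : E3, [t, t', s₀, s₁, s₂].Pairwise (· ≠ ·) ∧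
    (∀ v : E3, ({v} : Finset E3) ∈ L.faces ↔ v = t ∨ v = t' ∨ v = s₀ ∨ v = s₁ ∨ v = s₂) ∧
    ({s₀, s₁} : Finset E3) ∈ L.faces ∧ ({s₁, s₂} : Finset E3) ∈ L.faces ∧
    ({s₀, s₂} : Finset E3) ∈ L.faces ∧
    ({t, s₀} : Finset E3) ∈ L.faces ∧ ({t, s₁} : Finset E3) ∈ L.faces ∧
    ({t, s₂} : Finset E3) ∈ L.faces ∧
    ({t', s₀} : Finset E3) ∈ L.faces ∧ ({t', s₁} : Finset E3) ∈ L.faces ∧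
    ({t', s₂} : Finset E3) ∈ L.faces ∧
    ({t, t'} : Finset E3) ∉ L.faces

/-- The simplicial join of the subcomplex `Z` with the two points `t, t'`. -/
def joinSusp (Z : Set (Finset E3)) (t t' : E3) : Set (Finset E3) :=
  Z ∪ {{t}, {t'}} ∪ ((fun F => insert t F) '' Z) ∪ ((fun F => insert t' F) '' Z)

/-- `T` is the right-angled suspension in `L` of the subcomplex `Z` with
suspension points `t, t'` (not joined by an edge of `T`): every edge from a
suspension point to a vertex of `Z` is labeled `2`. -/
structure IsRASuspData (T Z : Set (Finset E3)) (t t' : E3) : Prop where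
  subset : T ⊆ L.faces
  zsubset : Z ⊆ L.faces
  zdown : ∀ F ∈ Z, ∀ G : Finset E3, G ⊆ F → G.Nonempty → G ∈ Z
  znonempty : Z.Nonempty
  tne : t ≠ t'
  t_notin : ∀ F ∈ Z, t ∉ F
  t'_notin : ∀ F ∈ Z, t' ∉ F
  labels : ∀ v : E3, ({v} : Finset E3) ∈ Z → m t v = 2 ∧ m t' v = 2
  eq : T = joinSusp Z t t'

/-- `T` is a right-angled suspension in `L`. -/
def IsRASusp (T : Set (Finset E3)) : Prop :=
  ∃ Z t t', IsRASuspData L m T Z t t'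

/-- The base `Z` of the suspension is neither a single vertex nor a single
edge, so that the suspension is infinite. -/
def InfiniteBase (Z : Set (Finset E3)) : Prop :=
  (¬ ∃ v : E3, Z = {({v} : Finset E3)}) ∧
  (¬ ∃ u v : E3, u ≠ v ∧ Z = {({u} : Finset E3), ({v} : Finset E3), ({u, v} : Finset E3)})

/-- `T` is an infinite, maximal right-angled suspension in `L`: it is an
RA-suspension of a full subcomplex which is neither a vertex nor an edge, and
`T` is not properly contained in another RA-suspension. -/
def IsInfMaxRASusp (T : Set (Finset E3)) : Prop :=
  (∃ Z t t', IsRASuspData L m T Z t t' ∧ InfiniteBase Z ∧ IsFullSubcomplex L Z) ∧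
  ∀ T', IsRASusp L m T' → T ⊆ T' → T = T'

/-- `v 0, v 1, v 2, v 3` (in cyclic order) form a Euclidean 4-circuit of `L`:
all four edge labels are `2` and the circuit is not the boundary of the union
of two 2-simplices of `L` sharing an edge. -/
def IsEuclidean4Circuit (v : Fin 4 → E3) : Prop :=
  Function.Injective v ∧
  (∀ i : Fin 4, ({v i, v (i + 1)} : Finset E3) ∈ L.faces) ∧
  (∀ i : Fin 4, m (v i) (v (i + 1)) = 2) ∧
  ¬ ((({v 0, v 1, v 2} : Finset E3) ∈ L.faces ∧ ({v 0, v 2, v 3} : Finset E3) ∈ L.faces) ∨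
     (({v 1, v 2, v 3} : Finset E3) ∈ L.faces ∧ ({v 0, v 1, v 3} : Finset E3) ∈ L.faces))

/-- The subcomplex consisting of the vertices and edges of the 4-circuit `v`. -/
def circuitComplex (v : Fin 4 → E3) : Set (Finset E3) :=
  {F | (∃ i : Fin 4, F = {v i}) ∨ (∃ i : Fin 4, F = {v i, v (i + 1)})}

/-- `T` is the right-angled cone on a Euclidean 4-circuit: the closed star of a
vertex `c` of valence four whose link is a Euclidean 4-circuit, all four edges
containing `c` being labeled `2`. -/
def IsRAConeOn4Circuit (T : Set (Finset E3)) : Prop :=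
  ∃ (c : E3) (v : Fin 4 → E3), IsEuclidean4Circuit L m v ∧
    linkVerts L c = {v 0, v 1, v 2, v 3} ∧
    (∀ i : Fin 4, ({c, v i, v (i + 1)} : Finset E3) ∈ L.faces) ∧
    (∀ i : Fin 4, m c (v i) = 2) ∧
    T = star L c

/-- The generating relation for Seifert subcomplexes: two infinite, maximal
RA-suspensions whose intersection is a Euclidean 4-circuit. -/
def SeifertRel (S S' : Set (Finset E3)) : Prop :=
  IsInfMaxRASusp L m S ∧ IsInfMaxRASusp L m S' ∧
  ∃ v : Fin 4 → E3, IsEuclidean4Circuit L m v ∧ S ∩ S' = circuitComplex v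

/-- `D` is a Seifert subcomplex of `L`: the union of the members of an
equivalence class of infinite, maximal RA-suspensions under the equivalence
relation generated by `SeifertRel`. -/
def IsSeifertSubcomplex (D : Set (Finset E3)) : Prop :=
  ∃ S₀, IsInfMaxRASusp L m S₀ ∧
    D = ⋃₀ {S | IsInfMaxRASusp L m S ∧ Relation.EqvGen (SeifertRel L m) S₀ S}

end CoxOrb

open CoxOrb

/-!
An infinite maximal RA-suspension is determined by its poles: metric flagness makes it the full
subcomplex on two vertices not joined by an edge and all their common right-angled neighbors. A
Euclidean 4-circuit becomes a square of right-angled edges whose two diagonals are not edges, and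
two distinct suspensions meeting in a square have its two diagonals as their pairs of poles. All the
geometry of the sphere is condensed into one fact: the graph of incident faces contains no `K₃,₃`
in which edges without a common end are spread over disjoint regions. Indeed, such a configuration
could be drawn with line segments in a plane, and there the logarithmic increments of the
differences of disjoint arcs contradict each other.

This forces the square shared by two suspensions to separate what is left of one from what is left
of the other, while each further suspension and each further square stays on one side. If no member
of the class of `D` contained the given circuit, one could therefore pass from member to member
towards the circuit without ever turning back, leaving behind ever larger sides, which is impossible
in a finite complex. So some member `S` contains the circuit. If the poles of `S` are not
`s₁` and `s₃`, then `S` already contains all right-angled neighbors of `s₀` and `s₂`. Otherwise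
either the suspension with poles `s₀` and `s₂` lies in `S`, or it is infinite and maximal and meets
`S` exactly in the circuit, hence belongs to the same class.
-/

namespace CoxOrb

/-! ### `K₃,₃` is not planar -/

section ContinuousLogarithm

theorem exists_continuous_log {A : Type*} [TopologicalSpace A] [SimplyConnectedSpace A]
    [LocallyPathConnectedSpace A] {f : A → ℂ} (hf : Continuous f) (hf₀ : ∀ a, f a ≠ 0) :
    ∃ G : A → ℂ, Continuous G ∧ ∀ a, Complex.exp (G a) = f a := by
  obtain ⟨a₀⟩ : Nonempty A := inferInstance
  obtain ⟨F, ⟨-, hF⟩, -⟩ := Complex.isCoveringMapOn_exp.existsUnique_continuousMap_lifts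
    (⟨f, hf⟩ : C(A, ℂ)) (a₀ := a₀) (Complex.exp_log (hf₀ a₀)) hf₀
  exact ⟨F, F.continuous, congrFun hF⟩

open Classical in
/-- The increment from `0` to `1` of a continuous logarithm of `g`, or `0` if there is none. -/
noncomputable def logIncrement (g : ℝ → ℂ) : ℂ :=
  if h : ∃ G : ℝ → ℂ, Continuous G ∧ ∀ s, Complex.exp (G s) = g s then
    h.choose 1 - h.choose 0 else 0

theorem logIncrement_eq {g G : ℝ → ℂ} {c : ℂ} (hG : Continuous G)
    (h : ∀ s, Complex.exp (G s) = c * g s) : logIncrement g = G 1 - G 0 := by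
  have hcg : ∀ s, c * g s ≠ 0 := fun s ↦ h s ▸ Complex.exp_ne_zero _
  have hc : c ≠ 0 := left_ne_zero_of_mul (hcg 0)
  have hg₀ : g 0 ≠ 0 := right_ne_zero_of_mul (hcg 0)
  have hex : ∃ G : ℝ → ℂ, Continuous G ∧ ∀ s, Complex.exp (G s) = g s :=
    ⟨fun s ↦ G s - Complex.log c, by fun_prop, fun s ↦ by
      rw [Complex.exp_sub, Complex.exp_log hc, h, mul_div_cancel_left₀ _ hc]⟩
  obtain ⟨hH, hexp⟩ := hex.choose_spec
  have heq : G = fun s ↦ hex.choose s + (G 0 - hex.choose 0) :=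
    Complex.isCoveringMap_exp.eq_of_comp_eq hG (by fun_prop) (funext fun s ↦ Subtype.ext <| by
      simp only [Function.comp_apply, Complex.exp_add, Complex.exp_sub, h, hexp]
      field_simp) 0 (by ring)
  rw [logIncrement, dif_pos hex, congrFun heq 1]
  ring

theorem exp_logIncrement {g : ℝ → ℂ} (hg : Continuous g) (hg₀ : ∀ s, g s ≠ 0) :
    Complex.exp (logIncrement g) = g 1 / g 0 := by
  obtain ⟨G, hG, h⟩ := exists_continuous_log hg hg₀
  rw [logIncrement_eq (c := 1) hG (by simpa using h), Complex.exp_sub, h, h]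

-- `f s - g t` has a continuous logarithm on the plane, whose increments around the unit square
-- cancel.
theorem logIncrement_sub_eq_of_disjoint {f g : ℝ → ℂ} (hf : Continuous f) (hg : Continuous g)
    (h : ∀ s t, f s ≠ g t) :
    logIncrement (fun s ↦ f s - g 0) - logIncrement (fun t ↦ g t - f 0) =
      logIncrement (fun s ↦ f s - g 1) - logIncrement (fun t ↦ g t - f 1) := by
  obtain ⟨G, hG, hexp⟩ := exists_continuous_log (f := fun x : ℝ × ℝ ↦ f x.1 - g x.2) (by fun_prop)
    fun x ↦ sub_ne_zero.2 (h _ _)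
  have horizontal (t : ℝ) : logIncrement (fun s ↦ f s - g t) = G (1, t) - G (0, t) :=
    logIncrement_eq (c := 1) (G := fun s ↦ G (s, t)) (by fun_prop) fun s ↦ by simp [hexp]
  have vertical (s : ℝ) : logIncrement (fun t ↦ g t - f s) = G (s, 1) - G (s, 0) :=
    logIncrement_eq (c := -1) (G := fun t ↦ G (s, t)) (by fun_prop) fun t ↦ by simp [hexp]
  rw [horizontal, horizontal, vertical, vertical]
  ring

end ContinuousLogarithm

section Planarity

theorem exp_sum_logIncrement_of_tripod {p : ℂ} {q : Fin 3 → ℂ} {γ : Fin 3 → ℝ → ℂ}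
    (hγ : ∀ j, Continuous (γ j)) (h₀ : ∀ j, γ j 0 = p) (h₁ : ∀ j, γ j 1 = q j)
    (hne : ∀ j k, j ≠ k → ∀ s, γ j s ≠ q k) :
    Complex.exp (∑ j, (logIncrement (fun s ↦ γ j s - q (j + 1)) -
      logIncrement (fun s ↦ γ (j + 1) s - q j))) = -1 := by
  have hexp {j k : Fin 3} (hjk : j ≠ k) :
      Complex.exp (logIncrement (fun s ↦ γ j s - q k)) = (q j - q k) / (p - q k) := by
    have := hγ j
    rw [exp_logIncrement (by fun_prop) fun s ↦ sub_ne_zero.2 (hne j k hjk s), h₀, h₁]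
  have hsucc (j : Fin 3) : j ≠ j + 1 := left_ne_add.2 one_ne_zero
  have hpq (j : Fin 3) : p - q j ≠ 0 := sub_ne_zero.2 (h₀ (j + 1) ▸ hne _ j (hsucc j).symm 0)
  have hterm (j : Fin 3) : Complex.exp (logIncrement (fun s ↦ γ j s - q (j + 1)) -
      logIncrement (fun s ↦ γ (j + 1) s - q j)) = -((p - q j) / (p - q (j + 1))) := by
    have hq : q j - q (j + 1) ≠ 0 := sub_ne_zero.2 (h₁ j ▸ hne j (j + 1) (hsucc j) 1)
    have hq' : q (j + 1) - q j ≠ 0 := sub_ne_zero.2 (sub_ne_zero.1 hq).symm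
    have := hpq j
    have := hpq (j + 1)
    rw [Complex.exp_sub, hexp (hsucc j), hexp (hsucc j).symm]
    field_simp
    ring
  have h₀ := hpq 0
  have h₁ := hpq 1
  have h₂ := hpq 2
  simp only [Complex.exp_sum, hterm, Fin.prod_univ_three, Fin.isValue, zero_add, Fin.reduceAdd]
  field_simp

-- Each of the three tripods contributes `-1` to a product of exponentials whose total exponent
-- vanishes, because the relations between disjoint edges telescope along the cycle of the `q j`.
theorem exists_crossing_of_completeBipartite {p q : Fin 3 → ℂ} {γ : Fin 3 → Fin 3 → ℝ → ℂ}
    (hγ : ∀ i j, Continuous (γ i j)) (h₀ : ∀ i j, γ i j 0 = p i) (h₁ : ∀ i j, γ i j 1 = q j) :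
    ∃ i i' j j', i ≠ i' ∧ j ≠ j' ∧ ∃ s t, γ i j s = γ i' j' t := by
  by_contra! hdisj
  have hsucc (j : Fin 3) : j ≠ j + 1 := left_ne_add.2 one_ne_zero
  have tripod (i : Fin 3) := exp_sum_logIncrement_of_tripod (hγ i) (h₀ i) (h₁ i)
    fun j k hjk s ↦ h₁ (i + 1) k ▸ hdisj i (i + 1) j k (hsucc i) hjk s 1
  have rect {i i' j j' : Fin 3} (hi : i ≠ i') (hj : j ≠ j') :
      logIncrement (fun s ↦ γ i j s - p i') - logIncrement (fun s ↦ γ i' j' s - p i) =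
        logIncrement (fun s ↦ γ i j s - q j') - logIncrement (fun s ↦ γ i' j' s - q j) := by
    simpa only [h₀, h₁] using
      logIncrement_sub_eq_of_disjoint (hγ i j) (hγ i' j') (hdisj i i' j j' hi hj)
  have cyclic (u : Fin 3 → ℂ) : ∑ i, u (i + 1) = ∑ i, u i := Equiv.sum_comp (Equiv.addRight 1) u
  set T : Fin 3 → Fin 3 → ℂ := fun i j ↦ logIncrement (fun s ↦ γ i j s - q (j + 1)) -
    logIncrement (fun s ↦ γ i (j + 1) s - q j)
  have adjacent (i : Fin 3) : ∑ j, T i j + ∑ j, T (i + 1) j = 0 := by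
    have h (j : Fin 3) : T i j + T (i + 1) j =
        (logIncrement (fun s ↦ γ i j s - p (i + 1)) + logIncrement (fun s ↦ γ (i + 1) j s - p i)) -
        (logIncrement (fun s ↦ γ i (j + 1) s - p (i + 1)) +
          logIncrement (fun s ↦ γ (i + 1) (j + 1) s - p i)) := by
      linear_combination -rect (hsucc i) (hsucc j) - rect (hsucc i).symm (hsucc j)
    rw [← Finset.sum_add_distrib, Finset.sum_congr rfl fun j _ ↦ h j, Finset.sum_sub_distrib,
      cyclic fun j ↦ logIncrement (fun s ↦ γ i j s - p (i + 1)) +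
        logIncrement (fun s ↦ γ (i + 1) j s - p i), sub_self]
  have total : ∑ i, ∑ j, T i j = 0 := by
    have := Finset.sum_eq_zero fun (i : Fin 3) (_ : i ∈ Finset.univ) ↦ adjacent i
    rw [Finset.sum_add_distrib, cyclic fun i ↦ ∑ j, T i j] at this
    exact add_self_eq_zero.1 this
  have := congrArg Complex.exp total
  rw [Complex.exp_sum, Finset.prod_congr rfl fun i _ ↦ tripod i, Complex.exp_zero] at this
  norm_num at this

end Planarity

/-! ### Complete bipartite graphs and segments in the sphere -/

section SegmentCovers

open Metric

variable {E : Type*} [NormedAddCommGroup E] [NormedSpace ℝ E]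

theorem exists_antipodal_eq (hE : 1 < Module.rank ℝ E) {c : E} {r : ℝ} (hr : 0 ≤ r) {f : E → ℝ}
    (hf : ContinuousOn f (sphere c r)) : ∃ y : E, ‖y‖ = r ∧ f (c + y) = f (c - y) := by
  have hadd : ContinuousOn (fun y ↦ f (c + y)) (sphere (0 : E) r) :=
    hf.comp (by fun_prop) fun y hy ↦ by simpa using hy
  have hsub : ContinuousOn (fun y ↦ f (c - y)) (sphere (0 : E) r) :=
    hf.comp (by fun_prop) fun y hy ↦ by simpa using hy
  obtain ⟨y, hy⟩ : (sphere (0 : E) r).Nonempty := by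
    have : Nontrivial E := rank_pos_iff_nontrivial.1 (zero_lt_one.trans hE)
    exact NormedSpace.sphere_nonempty.2 hr
  have hy' : -y ∈ sphere (0 : E) r := by simpa using hy
  obtain ⟨z, hz, hfz⟩ : ∃ z ∈ sphere (0 : E) r, f (c + z) = f (c - z) := by
    rcases le_total (f (c + y)) (f (c - y)) with h | h
    · exact (isPreconnected_sphere hE 0 r).intermediate_value₂ hy hy' hadd hsub h
        (by simpa [← sub_eq_add_neg] using h)
    · exact (isPreconnected_sphere hE 0 r).intermediate_value₂ hy' hy hadd hsub
        (by simpa [← sub_eq_add_neg] using h) h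
  exact ⟨z, by simpa using hz, hfz⟩

variable {M : Type*} [TopologicalSpace M] [ChartedSpace E M]

theorem not_injOn_of_isOpen (hE : 1 < Module.rank ℝ E) {U : Set M} (hU : IsOpen U)
    (hne : U.Nonempty) {f : M → ℝ} (hf : ContinuousOn f U) : ¬ U.InjOn f := by
  intro hinj
  obtain ⟨x, hx⟩ := hne
  set φ := chartAt E x
  have hopen : IsOpen (φ '' (φ.source ∩ U)) := φ.isOpen_image_source_inter hU
  obtain ⟨ε, hε, hball⟩ := Metric.isOpen_iff.1 hopen (φ x) ⟨x, ⟨mem_chart_source E x, hx⟩, rfl⟩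
  have hsphere : sphere (φ x) (ε / 2) ⊆ φ '' (φ.source ∩ U) :=
    (sphere_subset_ball (half_lt_self hε)).trans hball
  have hmaps : Set.MapsTo φ.symm (φ '' (φ.source ∩ U)) U := by
    rintro _ ⟨z, hz, rfl⟩
    rw [φ.left_inv hz.1]
    exact hz.2
  have htarget : φ '' (φ.source ∩ U) ⊆ φ.target := by
    rintro _ ⟨z, hz, rfl⟩
    exact φ.map_source hz.1
  obtain ⟨y, hy, heq⟩ := exists_antipodal_eq hE (half_pos hε).le
    (hf.comp (φ.continuousOn_symm.mono (hsphere.trans htarget)) fun z hz ↦ hmaps (hsphere hz))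
  have hadd : φ x + y ∈ φ '' (φ.source ∩ U) := hsphere (by simpa using hy)
  have hsub : φ x - y ∈ φ '' (φ.source ∩ U) := hsphere (by simpa using hy)
  have : φ x + y = φ x - y :=
    φ.symm.injOn (htarget hadd) (htarget hsub) (hinj (hmaps hadd) (hmaps hsub) heq)
  have hy₂ : (2 : ℝ) • y = 0 := by
    rw [two_smul]
    exact eq_neg_iff_add_eq_zero.1 (by simpa [sub_eq_add_neg] using this)
  have hy₀ : y = 0 := (smul_eq_zero.1 hy₂).resolve_left two_ne_zero
  rw [hy₀, norm_zero] at hy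
  exact (half_pos hε).ne hy

theorem exists_forall_notMem_of_injOn [BaireSpace M] [Nonempty M] (hE : 1 < Module.rank ℝ E)
    {ι : Type*} [Countable ι] {K : ι → Set M} (hK : ∀ i, IsClosed (K i)) {f : ι → M → ℝ}
    (hf : ∀ i, Continuous (f i)) (hinj : ∀ i, (K i).InjOn (f i)) : ∃ x, ∀ i, x ∉ K i := by
  by_contra! hcover
  obtain ⟨i, hi⟩ := nonempty_interior_of_iUnion_of_closed hK (Set.iUnion_eq_univ_iff.2 hcover)
  exact not_injOn_of_isOpen hE isOpen_interior hi (hf i).continuousOn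
    ((hinj i).mono interior_subset)

end SegmentCovers

theorem injOn_inner_segment {F : Type*} [NormedAddCommGroup F] [InnerProductSpace ℝ F] (a b : F) :
    (segment ℝ a b).InjOn fun x ↦ inner ℝ (b - a) x := by
  intro x hx y hy hxy
  rw [segment_eq_image'] at hx hy
  obtain ⟨s, -, rfl⟩ := hx
  obtain ⟨t, -, rfl⟩ := hy
  simp only [inner_add_right, inner_smul_right, add_right_inj, mul_eq_mul_right_iff,
    inner_self_eq_zero] at hxy
  rcases hxy with rfl | h
  · rfl
  · simp [h]

section Sphere

variable {X : Set E3}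

instance : Fact (Module.finrank ℝ E3 = 2 + 1) := ⟨by simp⟩

theorem exists_notMem_segments (e : X ≃ₜ Metric.sphere (0 : E3) 1) {s : Set (E3 × E3)}
    (hs : s.Countable) : ∃ x ∈ X, ∀ p ∈ s, x ∉ segment ℝ p.1 p.2 := by
  have : Countable s := hs
  have : Nonempty (Metric.sphere (0 : E3) 1) :=
    (NormedSpace.sphere_nonempty.2 zero_le_one).to_subtype
  have hrank : 1 < Module.rank ℝ (EuclideanSpace ℝ (Fin 2)) := by
    rw [← Module.finrank_eq_rank]
    simp
  have hclosed (a b : E3) : IsClosed (segment ℝ a b) :=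
    convexHull_pair (𝕜 := ℝ) a b ▸ (Set.toFinite {a, b}).isClosed_convexHull ℝ
  have hcont : Continuous fun y ↦ (e.symm y : E3) := by fun_prop
  obtain ⟨y, hy⟩ := exists_forall_notMem_of_injOn (ι := s) hrank
    (fun p ↦ (hclosed p.1.1 p.1.2).preimage hcont)
    (f := fun p y ↦ inner ℝ (p.1.2 - p.1.1) (e.symm y : E3)) (fun p ↦ by fun_prop)
    (fun p ↦ (injOn_inner_segment p.1.1 p.1.2).comp
      (Subtype.val_injective.comp e.symm.injective).injOn fun y hy ↦ hy)
  exact ⟨e.symm y, (e.symm y).2, fun p hp ↦ hy ⟨p, hp⟩⟩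

theorem exists_injective_complex (e : X ≃ₜ Metric.sphere (0 : E3) 1) {x : E3} (hx : x ∈ X) :
    ∃ f : ↥(X \ {x}) → ℂ, Continuous f ∧ Function.Injective f := by
  let σ := stereographic' 2 (e ⟨x, hx⟩)
  let toSphere : ↥(X \ {x}) → Metric.sphere (0 : E3) 1 := fun y ↦ e ⟨y, y.2.1⟩
  have hsource (y : ↥(X \ {x})) : toSphere y ∈ σ.source := by
    rw [stereographic'_source, Set.mem_compl_singleton_iff, Ne, e.injective.eq_iff,
      Subtype.mk.injEq]
    exact y.2.2
  have hcont : Continuous toSphere := e.continuous.comp (by fun_prop)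
  refine ⟨fun y ↦ Complex.orthonormalBasisOneI.repr.symm (σ (toSphere y)),
    (LinearIsometryEquiv.continuous _).comp (σ.continuousOn.comp_continuous hcont hsource),
    fun y z hyz ↦ ?_⟩
  have := σ.injOn (hsource y) (hsource z) (LinearIsometryEquiv.injective _ hyz)
  exact Subtype.ext (Subtype.mk.inj (e.injective this))

theorem exists_not_disjoint_of_joinedIn (e : X ≃ₜ Metric.sphere (0 : E3) 1) {p q : Fin 3 → E3}
    {R : Fin 3 → Fin 3 → Set E3} {x : E3} (hx : x ∈ X) (hR : ∀ i j, R i j ⊆ X \ {x})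
    (hjoin : ∀ i j, JoinedIn (R i j) (p i) (q j)) :
    ∃ i i' j j', i ≠ i' ∧ j ≠ j' ∧ ¬ Disjoint (R i j) (R i' j') := by
  obtain ⟨f, hf, hinj⟩ := exists_injective_complex e hx
  have hmem (i j) (t : ℝ) : (hjoin i j).somePath.extend t ∈ R i j := (hjoin i j).somePath_mem _
  let γ (i j : Fin 3) (t : ℝ) : ↥(X \ {x}) := ⟨_, hR i j (hmem i j t)⟩
  have hγ (i j) : Continuous (γ i j) := (Path.continuous_extend _).subtype_mk _
  obtain ⟨i, i', j, j', hi, hj, s, t, hst⟩ :=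
    exists_crossing_of_completeBipartite (γ := fun i j t ↦ f (γ i j t)) (p := fun i ↦ f (γ i 0 0))
      (q := fun j ↦ f (γ 0 j 1)) (fun i j ↦ hf.comp (hγ i j)) (by simp [γ]) (by simp [γ])
  have hst : (γ i j s : E3) = γ i' j' t := congrArg Subtype.val (hinj hst)
  exact ⟨i, i', j, j', hi, hj,
    Set.not_disjoint_iff.2 ⟨γ i j s, hmem i j s, hst ▸ hmem i' j' t⟩⟩

end Sphere

/-! ### Graphs without `K₃,₃` minors -/

section GraphRegions

variable {V : Type*} {G : SimpleGraph V} {A : Set V} {u v w : V}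

/-- `u` and `v` are joined by a walk of `G` all of whose vertices lie in `A`. -/
def JoinedWithin (G : SimpleGraph V) (A : Set V) (u v : V) : Prop :=
  ∃ P : G.Walk u v, ∀ x ∈ P.support, x ∈ A

namespace JoinedWithin

theorem refl (hu : u ∈ A) : JoinedWithin G A u u := ⟨.nil, by simpa⟩

theorem cons (huv : G.Adj u v) (hu : u ∈ A) : JoinedWithin G A v w → JoinedWithin G A u w :=
  fun ⟨P, hP⟩ ↦ ⟨.cons huv P, by simpa [hu] using hP⟩

theorem of_adj (huv : G.Adj u v) (hu : u ∈ A) (hv : v ∈ A) : JoinedWithin G A u v :=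
  cons huv hu (refl hv)

theorem symm : JoinedWithin G A u v → JoinedWithin G A v u := fun ⟨P, hP⟩ ↦
  ⟨P.reverse, by simpa using hP⟩

theorem trans : JoinedWithin G A u v → JoinedWithin G A v w → JoinedWithin G A u w :=
  fun ⟨P, hP⟩ ⟨Q, hQ⟩ ↦ ⟨P.append Q, fun x hx ↦
    ((SimpleGraph.Walk.mem_support_append_iff P Q).1 hx).elim (hP x) (hQ x)⟩

theorem left_mem : JoinedWithin G A u v → u ∈ A := fun ⟨P, hP⟩ ↦ hP u P.start_mem_support

theorem right_mem (h : JoinedWithin G A u v) : v ∈ A := h.symm.left_mem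

theorem inter_support (h : JoinedWithin G A u v) (hv : v ∈ G.support) :
    JoinedWithin G (A ∩ G.support) u v := by
  obtain ⟨P, hP⟩ := h
  induction P with
  | nil => exact refl ⟨hP _ (by simp), hv⟩
  | cons huv P ih =>
    exact cons huv ⟨hP _ (by simp), _, huv⟩ (ih hv fun x hx ↦ hP x (by simp [hx]))

theorem mem_support (h : JoinedWithin G A u v) (huv : u ≠ v) : v ∈ G.support := by
  obtain ⟨P, -⟩ := h.symm
  cases P with
  | nil => exact (huv rfl).elim
  | cons hadj _ => exact ⟨_, hadj⟩

end JoinedWithin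

/-- A strong form of the absence of `K₃,₃` minors: there are no vertices `p i`, `q j` and regions
`A i j`, each joining `p i` to `q j`, such that regions sharing neither index are disjoint. -/
def K33Free (G : SimpleGraph V) : Prop :=
  ∀ (p q : Fin 3 → V) (A : Fin 3 → Fin 3 → Set V), (∀ i j, JoinedWithin G (A i j) (p i) (q j)) →
    ¬ ∀ i i' j j', i ≠ i' → j ≠ j' → Disjoint (A i j) (A i' j')

theorem K33Free.of_support (h : ∀ (p q : Fin 3 → V) (A : Fin 3 → Fin 3 → Set V),
    (∀ i j, A i j ⊆ G.support) → (∀ i j, JoinedWithin G (A i j) (p i) (q j)) →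
      ¬ ∀ i i' j j', i ≠ i' → j ≠ j' → Disjoint (A i j) (A i' j')) : K33Free G := by
  intro p q A hA hdisj
  have hsucc (j : Fin 3) : j ≠ j + 1 := left_ne_add.2 one_ne_zero
  have hne (i j) : p i ≠ q j := fun hpq ↦
    Set.disjoint_left.1 (hdisj i (i + 1) (j + 1) j (hsucc i) (hsucc j).symm) (hA i (j + 1)).left_mem
      (hpq ▸ (hA (i + 1) j).right_mem)
  exact h p q (fun i j ↦ A i j ∩ G.support) (fun i j ↦ Set.inter_subset_right)
    (fun i j ↦ (hA i j).inter_support ((hA i j).mem_support (hne i j)))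
    fun i i' j j' hi hj ↦ (hdisj i i' j j' hi hj).mono Set.inter_subset_left Set.inter_subset_left

end GraphRegions

/-! ### The face poset of a triangulated sphere -/

section OpenSimplex

variable {E : Type*} [AddCommGroup E] [Module ℝ E] {F G : Finset E}

/-- The open simplex on `F`: the points of its convex hull lying on no proper subsimplex. -/
def openSimplex (F : Finset E) : Set E :=
  {x ∈ convexHull ℝ (F : Set E) | ∀ G ⊂ F, x ∉ convexHull ℝ (G : Set E)}

theorem sum_smul_mem_openSimplex (hF : AffineIndependent ℝ ((↑) : F → E)) {w : E → ℝ}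
    (hw : ∀ v ∈ F, 0 < w v) (hsum : ∑ v ∈ F, w v = 1) : ∑ v ∈ F, w v • v ∈ openSimplex F := by
  classical
  refine ⟨Finset.mem_convexHull'.2 ⟨w, fun v hv ↦ (hw v hv).le, hsum, rfl⟩, fun G hGF hx ↦ ?_⟩
  obtain ⟨w', -, hsum', hx'⟩ := Finset.mem_convexHull'.1 hx
  obtain ⟨a, haF, haG⟩ := Finset.exists_of_ssubset hGF
  let δ (v : E) : ℝ := w v - if v ∈ G then w' v else 0
  have hδ : ∑ v ∈ F, δ v = 0 := by
    simp [δ, Finset.sum_ite_mem, Finset.inter_eq_right.2 hGF.1, hsum, hsum']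
  have hδ' : ∑ v ∈ F, δ v • v = 0 := by
    simp [δ, sub_smul, ite_smul, Finset.sum_ite_mem, Finset.inter_eq_right.2 hGF.1, hx']
  have := affineIndependent_iff.1 hF Finset.univ (fun v ↦ δ v)
    (by rw [Finset.sum_coe_sort F δ, hδ]) (by rw [Finset.sum_coe_sort F fun v ↦ δ v • v, hδ'])
    ⟨a, haF⟩ (Finset.mem_univ _)
  exact (hw a haF).ne' (by simpa [δ, haG] using this)

/-- The barycenter of the vertices of `F`. -/
noncomputable def barycenter (F : Finset E) : E := ∑ v ∈ F, (F.card : ℝ)⁻¹ • v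

theorem barycenter_mem_openSimplex (hF : AffineIndependent ℝ ((↑) : F → E)) (hne : F.Nonempty) :
    barycenter F ∈ openSimplex F := by
  have : (0 : ℝ) < F.card := by exact_mod_cast hne.card_pos
  exact sum_smul_mem_openSimplex hF (fun v _ ↦ inv_pos.2 this) (by simp [this.ne'])

theorem segment_barycenter_subset (hG : AffineIndependent ℝ ((↑) : G → E)) (hFG : F ⊆ G)
    (hne : F.Nonempty) :
    segment ℝ (barycenter F) (barycenter G) ⊆ openSimplex F ∪ openSimplex G := by
  classical
  rintro _ ⟨s, t, hs, ht, hst, rfl⟩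
  rcases ht.eq_or_lt with rfl | ht
  · left
    rw [add_zero] at hst
    rw [hst, one_smul, zero_smul, add_zero]
    exact barycenter_mem_openSimplex (hG.mono hFG) hne
  · right
    have hcard' : (0 : ℝ) < G.card := by exact_mod_cast (hne.mono hFG).card_pos
    let w (v : E) : ℝ := (if v ∈ F then s * (F.card : ℝ)⁻¹ else 0) + t * (G.card : ℝ)⁻¹
    have hpos : ∀ v ∈ G, 0 < w v := fun v _ ↦
      add_pos_of_nonneg_of_pos (by split_ifs <;> positivity) (by positivity)
    have hsum : ∑ v ∈ G, w v = 1 := by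
      simp only [w, Finset.sum_add_distrib, Finset.sum_ite_mem, Finset.inter_eq_right.2 hFG,
        Finset.sum_const, nsmul_eq_mul]
      field_simp
      exact hst
    convert! sum_smul_mem_openSimplex hG hpos hsum using 1
    simp only [w, barycenter, add_smul, ite_smul, zero_smul, Finset.sum_add_distrib,
      Finset.sum_ite_mem, Finset.inter_eq_right.2 hFG, mul_smul, Finset.smul_sum]

end OpenSimplex

section FacePoset

variable {E : Type*} [AddCommGroup E] [Module ℝ E] {L : SimplicialComplex ℝ E}
  {F G : Finset E} {A B : Set (Finset E)}

theorem eq_of_mem_openSimplex (hF : F ∈ L.faces) (hG : G ∈ L.faces) {x : E}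
    (hxF : x ∈ openSimplex F) (hxG : x ∈ openSimplex G) : F = G := by
  classical
  have hx : x ∈ convexHull ℝ ((F ∩ G : Finset E) : Set E) := by
    rw [Finset.coe_inter]
    exact L.inter_subset_convexHull hF hG ⟨hxF.1, hxG.1⟩
  have hle : F ⊆ G := by
    by_contra h
    exact hxF.2 _ (Finset.inter_subset_left.ssubset_of_ne (mt Finset.inter_eq_left.1 h)) hx
  have hge : G ⊆ F := by
    by_contra h
    exact hxG.2 _ (Finset.inter_subset_right.ssubset_of_ne (mt Finset.inter_eq_right.1 h)) hx
  exact hle.antisymm hge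

/-- The segments realizing, in the barycentric subdivision, the incidences among the simplices
in `A`; a segment is encoded by its endpoints. -/
def flagSegments (A : Set (Finset E)) : Set (E × E) :=
  (fun p ↦ (barycenter p.1, barycenter p.2)) '' {p : Finset E × Finset E |
    p.1 ∈ A ∧ p.2 ∈ A ∧ p.1 ⊆ p.2}

/-- The union of the segments in `flagSegments A`. -/
def flagSpace (A : Set (Finset E)) : Set E := ⋃ p ∈ flagSegments A, segment ℝ p.1 p.2

theorem segment_subset_flagSpace (hF : F ∈ A) (hG : G ∈ A) (hFG : F ⊆ G) :
    segment ℝ (barycenter F) (barycenter G) ⊆ flagSpace A :=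
  Set.subset_biUnion_of_mem (u := fun p : E × E ↦ segment ℝ p.1 p.2)
    (show (barycenter F, barycenter G) ∈ flagSegments A from ⟨(F, G), ⟨hF, hG, hFG⟩, rfl⟩)

theorem exists_mem_openSimplex (hA : A ⊆ L.faces) {x : E} (hx : x ∈ flagSpace A) :
    ∃ F ∈ A, x ∈ openSimplex F := by
  obtain ⟨_, ⟨⟨F, G⟩, ⟨hF, hG, hFG⟩, rfl⟩, hx⟩ := Set.mem_iUnion₂.1 hx
  rcases segment_barycenter_subset (L.indep (hA hG)) hFG (L.nonempty_of_mem_faces (hA hF)) hx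
    with h | h
  exacts [⟨F, hF, h⟩, ⟨G, hG, h⟩]

theorem flagSpace_subset_space (hA : A ⊆ L.faces) : flagSpace A ⊆ L.space := fun _ hx ↦
  let ⟨_, hF, hxF⟩ := exists_mem_openSimplex hA hx
  L.convexHull_subset_space (hA hF) hxF.1

theorem disjoint_flagSpace (hA : A ⊆ L.faces) (hB : B ⊆ L.faces) (hAB : Disjoint A B) :
    Disjoint (flagSpace A) (flagSpace B) := by
  refine Set.disjoint_left.2 fun x hxA hxB ↦ ?_
  obtain ⟨F, hF, hxF⟩ := exists_mem_openSimplex hA hxA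
  obtain ⟨G, hG, hxG⟩ := exists_mem_openSimplex hB hxB
  obtain rfl := eq_of_mem_openSimplex (hA hF) (hB hG) hxF hxG
  exact Set.disjoint_left.1 hAB hF hG

/-- The comparability graph of the face poset of `L`; non-faces are isolated vertices. -/
def incidenceGraph (L : SimplicialComplex ℝ E) : SimpleGraph (Finset E) where
  Adj F G := F ∈ L.faces ∧ G ∈ L.faces ∧ F ≠ G ∧ (F ⊆ G ∨ G ⊆ F)
  symm := ⟨fun _ _ ⟨hF, hG, hne, h⟩ ↦ ⟨hG, hF, hne.symm, h.symm⟩⟩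
  loopless := ⟨fun _ h ↦ h.2.2.1 rfl⟩

theorem JoinedWithin.joinedIn_flagSpace [TopologicalSpace E] [ContinuousAdd E]
    [ContinuousSMul ℝ E] (h : JoinedWithin (incidenceGraph L) A F G) :
    JoinedIn (flagSpace A) (barycenter F) (barycenter G) := by
  have joined {F G : Finset E} (hF : F ∈ A) (hG : G ∈ A) (hFG : F ⊆ G) :
      JoinedIn (flagSpace A) (barycenter F) (barycenter G) :=
    (JoinedIn.of_segment_subset subset_rfl).mono (segment_subset_flagSpace hF hG hFG)
  obtain ⟨P, hP⟩ := h
  induction P with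
  | nil => exact joined (hP _ (by simp)) (hP _ (by simp)) subset_rfl
  | @cons F H _ hFH P ih =>
    have hF := hP F (by simp)
    have hH := hP H (by simp)
    have hFH : JoinedIn (flagSpace A) (barycenter F) (barycenter H) :=
      hFH.2.2.2.elim (joined hF hH) fun h ↦ (joined hH hF h).symm
    exact hFH.trans (ih fun x hx ↦ hP x (by simp [hx]))

end FacePoset

theorem incidenceGraph_k33Free {L : SimplicialComplex ℝ E3} (hfin : L.faces.Finite)
    (e : L.space ≃ₜ Metric.sphere (0 : E3) 1) : K33Free (incidenceGraph L) := by
  refine K33Free.of_support fun p q A hsupp hA hdisj ↦ ?_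
  have hsub (i j) : A i j ⊆ L.faces := fun F hF ↦
    let ⟨_, h⟩ := hsupp i j hF
    h.1
  have hcount : (flagSegments L.faces).Countable :=
    (((hfin.prod hfin).subset fun p hp ↦ ⟨hp.1, hp.2.1⟩).image _).countable
  obtain ⟨x, hx, hmiss⟩ := exists_notMem_segments e hcount
  have hmiss (i j) : flagSpace (A i j) ⊆ L.space \ {x} := by
    refine fun y hy ↦ ⟨flagSpace_subset_space (hsub i j) hy, ?_⟩
    rintro rfl
    obtain ⟨_, ⟨p, ⟨hF, hG, hFG⟩, rfl⟩, hy⟩ := Set.mem_iUnion₂.1 hy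
    exact hmiss _ ⟨p, ⟨hsub i j hF, hsub i j hG, hFG⟩, rfl⟩ hy
  obtain ⟨i, i', j, j', hi, hj, h⟩ :=
    exists_not_disjoint_of_joinedIn e hx hmiss fun i j ↦ (hA i j).joinedIn_flagSpace
  exact h (disjoint_flagSpace (hsub i j) (hsub i' j') (hdisj i i' j j' hi hj))

section Skeleton

variable {E : Type*} [AddCommGroup E] [Module ℝ E] {L : SimplicialComplex ℝ E} {A B : Set E}
  {u v : E}

/-- The simplices of `L` all of whose vertices lie in `A`. -/
def fullSubcomplex (L : SimplicialComplex ℝ E) (A : Set E) : Set (Finset E) :=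
  {F ∈ L.faces | ↑F ⊆ A}

theorem disjoint_fullSubcomplex (hAB : Disjoint A B) :
    Disjoint (fullSubcomplex L A) (fullSubcomplex L B) := by
  refine Set.disjoint_left.2 fun F hFA hFB ↦ ?_
  obtain ⟨v, hv⟩ := L.nonempty_of_mem_faces hFA.1
  exact Set.disjoint_left.1 hAB (hFA.2 hv) (hFB.2 hv)

variable [DecidableEq E]

/-- The graph of vertices and edges of `L`; points that are not vertices are isolated. -/
def skeleton (L : SimplicialComplex ℝ E) : SimpleGraph E where
  Adj u v := u ≠ v ∧ {u, v} ∈ L.faces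
  symm := ⟨fun u v ⟨hne, h⟩ ↦ ⟨hne.symm, Finset.pair_comm u v ▸ h⟩⟩
  loopless := ⟨fun _ h ↦ h.1 rfl⟩

theorem vertex_of_skeleton_adj (h : (skeleton L).Adj u v) : {u} ∈ L.faces :=
  L.down_closed h.2 (by simp) (Finset.singleton_nonempty u)

theorem skeleton_adj_of_mem {F : Finset E} (hF : F ∈ L.faces) (hu : u ∈ F) (hv : v ∈ F)
    (huv : u ≠ v) : (skeleton L).Adj u v :=
  ⟨huv, L.down_closed hF (by simp [Finset.insert_subset_iff, hu, hv]) (by simp)⟩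

theorem JoinedWithin.fullSubcomplex (h : JoinedWithin (skeleton L) A u v) (hu : {u} ∈ L.faces) :
    JoinedWithin (incidenceGraph L) (fullSubcomplex L A) {u} {v} := by
  obtain ⟨P, hP⟩ := h
  induction P with
  | nil => exact refl ⟨hu, by simpa using hP⟩
  | @cons u w v huw P ih =>
    have hu' : u ∈ A := hP u (by simp)
    have hw' : w ∈ A := hP w (by simp)
    have hw : {w} ∈ L.faces := vertex_of_skeleton_adj huw.symm
    refine cons (v := {u, w}) ⟨hu, huw.2, ?_, Or.inl (by simp)⟩ ⟨hu, by simpa⟩ <|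
      cons ⟨huw.2, hw, ?_, Or.inr (by simp)⟩ ⟨huw.2, by simp [Set.insert_subset_iff, hu', hw']⟩ <|
      ih hw fun x hx ↦ hP x (by simp [hx])
    · simpa [Finset.ext_iff] using fun h ↦ huw.1 h.symm
    · simpa [Finset.ext_iff] using huw.1

theorem skeleton_k33Free (h : K33Free (incidenceGraph L)) : K33Free (skeleton L) :=
  K33Free.of_support fun p q A hsupp hA hdisj ↦ by
    have hp (i) : {p i} ∈ L.faces := by
      obtain ⟨_, hadj⟩ := hsupp i 0 (hA i 0).left_mem
      exact vertex_of_skeleton_adj hadj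
    exact h (fun i ↦ {p i}) (fun j ↦ {q j}) _ (fun i j ↦ (hA i j).fullSubcomplex (hp i))
      fun i i' j j' hi hj ↦ disjoint_fullSubcomplex (hdisj i i' j j' hi hj)

-- The face `F` itself is a third branch vertex, adjacent to each of its vertices.
theorem false_of_two_cones_over_face (h : K33Free (incidenceGraph L)) {F : Finset E}
    (hF : F ∈ L.faces) {p : Fin 2 → E} {q : Fin 3 → E} (hq : ∀ j, q j ∈ F)
    {B : Fin 2 → Fin 3 → Set E} (hB : ∀ i j, JoinedWithin (skeleton L) (B i j) (p i) (q j))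
    (hdisj : ∀ i i' j j', i ≠ i' → j ≠ j' → Disjoint (B i j) (B i' j'))
    (hqB : ∀ i j j', j ≠ j' → q j ∉ B i j') : False := by
  have hvert (j) : {q j} ∈ L.faces := L.down_closed hF (by simp [hq]) (by simp)
  have hcard : F.card ≠ 1 := by
    intro hF₁
    have h01 : q 0 = q 1 := Finset.card_le_one.1 hF₁.le _ (hq 0) _ (hq 1)
    exact hqB 0 0 1 zero_ne_one (h01 ▸ (hB 0 1).right_mem)
  have hface (j) : JoinedWithin (incidenceGraph L) {F, {q j}} F {q j} :=
    .of_adj ⟨hF, hvert j, fun h ↦ hcard (by simp [h]), Or.inr (by simp [hq])⟩ (by simp) (by simp)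
  have hfaceB (i j j') (hj : j ≠ j') : Disjoint {F, {q j}} (fullSubcomplex L (B i j')) := by
    rw [Set.disjoint_left]
    rintro _ (rfl | rfl) hmem
    exacts [hqB i j j' hj (hmem.2 (hq j)), hqB i j j' hj (hmem.2 (by simp))]
  refine h (Fin.cons F fun i ↦ {p i}) (fun j ↦ {q j})
    (Fin.cons (fun j ↦ {F, {q j}}) fun i j ↦ fullSubcomplex L (B i j)) ?_ ?_
  · refine Fin.cases hface fun i j ↦ ?_
    exact ((hB i j).symm.fullSubcomplex (hvert j)).symm
  · refine Fin.cases (Fin.cases (by simp) ?_) fun i ↦ Fin.cases ?_ ?_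
    · exact fun i' j j' _ hj ↦ hfaceB i' j j' hj
    · exact fun j j' _ hj ↦ (hfaceB i j' j hj.symm).symm
    · exact fun i' j j' hi hj ↦ disjoint_fullSubcomplex
        (hdisj i i' j j' (fun h ↦ hi (congrArg Fin.succ h)) hj)

theorem false_of_join_mem (h : K33Free (incidenceGraph L)) {a : Fin 3 → E} {q : Fin 3 → Finset E}
    (ha : a.Injective) (hq : q.Injective) (haq : ∀ i j, a i ∉ q j) (hne : ∀ j, (q j).Nonempty)
    (hface : ∀ i j, insert (a i) (q j) ∈ L.faces) : False := by
  have hmem (j) : q j ∈ L.faces := L.down_closed (hface 0 j) (by simp) (hne j)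
  have hsing (i) : {a i} ∈ L.faces := L.down_closed (hface i 0) (by simp) (by simp)
  have hcone (i j) : q j ≠ insert (a i) (q j) := fun h ↦ haq i j (h ▸ by simp)
  have hapex (i j) : {a i} ≠ insert (a i) (q j) := fun h ↦
    let ⟨x, hx⟩ := hne j
    haq i j (Finset.mem_singleton.1 (h ▸ Finset.mem_insert_of_mem hx : x ∈ {a i}) ▸ hx)
  have hregion {i i' j F} (hi : i ≠ i')
      (hF : F ∈ ({{a i}, insert (a i) (q j), q j} : Set (Finset E))) :
      (a i ∈ F ∨ F = q j) ∧ a i' ∉ F := by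
    have := ha.ne hi.symm
    rcases hF with rfl | rfl | rfl <;> simp [haq, this]
  refine h (fun i ↦ {a i}) q (fun i j ↦ {{a i}, insert (a i) (q j), q j}) (fun i j ↦ ?_)
    fun i i' j j' hi hj ↦ Set.disjoint_left.2 ?_
  · exact .cons ⟨hsing i, hface i j, hapex i j, by simp⟩ (by simp) <|
      .of_adj ⟨hface i j, hmem j, (hcone i j).symm, by simp⟩ (by simp) (by simp)
  · exact fun F hF hF' ↦ hj (hq (((hregion hi hF).1.resolve_left (hregion hi.symm hF').2).symm.trans
      ((hregion hi.symm hF').1.resolve_left (hregion hi hF).2)))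

end Skeleton

/-! ### Suspensions glued along squares -/

section Squares

variable {V : Type*} {G R : SimpleGraph V} {a b c d p p' t t' u v w w' z z' : V} {X : Set V}

/-- A square of `R`-edges whose diagonals are not `G`-edges. With `R` the edges labeled `2` of a
metric flag triangulation and `G` all its edges, these are the Euclidean 4-circuits. -/
structure IsSquare (G R : SimpleGraph V) (a b c d : V) : Prop where
  compl_adj : Gᶜ.Adj a c
  compl_adj' : Gᶜ.Adj b d
  mem : b ∈ R.commonNeighbors a c
  mem' : d ∈ R.commonNeighbors a c

theorem mem_commonNeighbors_swap (hz : z ∈ R.commonNeighbors t t')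
    (hz' : z' ∈ R.commonNeighbors t t') : t ∈ R.commonNeighbors z z' :=
  ⟨hz.1.symm, hz'.1.symm⟩

theorem rotate_square : ({b, c, d, a} : Set V) = {a, b, c, d} := by
  grind

namespace IsSquare

theorem rotate (h : IsSquare G R a b c d) : IsSquare G R b c d a where
  compl_adj := h.compl_adj'
  compl_adj' := h.compl_adj.symm
  mem := ⟨h.mem.2.symm, h.mem'.2.symm⟩
  mem' := ⟨h.mem.1.symm, h.mem'.1.symm⟩

theorem mono {R' : SimpleGraph V} (hR : R ≤ R') (h : IsSquare G R a b c d) :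
    IsSquare G R' a b c d where
  compl_adj := h.compl_adj
  compl_adj' := h.compl_adj'
  mem := ⟨hR h.mem.1, hR h.mem.2⟩
  mem' := ⟨hR h.mem'.1, hR h.mem'.2⟩

-- Otherwise `a`, `c`, `w'` and `b`, `d`, `w` are the branch vertices of a `K₃,₃`.
theorem not_joinedWithin (hG : K33Free G) (h : IsSquare G G a b c d)
    (hw : w ∈ G.commonNeighbors a c) (hw' : w' ∈ G.commonNeighbors b d) (hne : w ≠ w') :
    ¬ JoinedWithin G {a, b, c, d}ᶜ w w' := by
  intro hP
  have hwS := hP.left_mem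
  have hwS' := hP.right_mem
  simp only [Set.mem_compl_iff, Set.mem_insert_iff, Set.mem_singleton_iff, not_or] at hwS hwS'
  have hac := h.compl_adj.ne
  have hbd := h.compl_adj'.ne
  have hab := h.mem.1.ne
  have hcb := h.mem.2.ne
  have had := h.mem'.1.ne
  have hcd := h.mem'.2.ne
  have hpair {x y : V} (hxy : G.Adj x y) : JoinedWithin G {x, y} x y :=
    .of_adj hxy (by simp) (by simp)
  refine hG ![a, c, w'] ![b, d, w]
    ![![{a, b}, {a, d}, {a, w}], ![{c, b}, {c, d}, {c, w}], ![{w', b}, {w', d}, {a, b, c, d}ᶜ]]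
    ?_ ?_
  · have hadj (x y) (hx : x = a ∨ x = c) (hy : y = b ∨ y = d ∨ y = w) : G.Adj x y := by
      rcases hx with rfl | rfl <;> rcases hy with rfl | rfl | rfl
      exacts [h.mem.1, h.mem'.1, hw.1, h.mem.2, h.mem'.2, hw.2]
    intro i j
    fin_cases i <;> fin_cases j
    all_goals first
      | exact hpair (hadj _ _ (by simp) (by simp))
      | exact hpair hw'.1.symm
      | exact hpair hw'.2.symm
      | exact hP.symm
  · intro i i' j j' hi hj
    rw [Set.disjoint_left]
    fin_cases i <;> fin_cases i' <;> first | exact (hi rfl).elim | skip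
    all_goals fin_cases j <;> fin_cases j' <;> first | exact (hj rfl).elim | skip
    all_goals simp only [Fin.zero_eta, Fin.mk_one, Fin.reduceFinMk, Matrix.cons_val,
      Set.mem_insert_iff, Set.mem_singleton_iff, Set.mem_compl_iff]; grind

end IsSquare

/-! #### Suspensions -/

/-- The vertex set of the suspension with suspension points `p` and `q` over all their common
`R`-neighbors. -/
def suspension (R : SimpleGraph V) (p q : V) : Set V :=
  {p, q} ∪ R.commonNeighbors p q

/-- `X` spreads over more than a vertex or an edge of `G`. -/
def IsSpread (G : SimpleGraph V) (X : Set V) : Prop :=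
  ∀ u v, (u = v ∨ G.Adj u v) → ¬ X ⊆ {u, v}

/-- `W` is the vertex set of an infinite suspension over all common neighbors of its suspension
points. -/
def IsInfiniteSuspension (G R : SimpleGraph V) (W : Set V) : Prop :=
  ∃ t t', Gᶜ.Adj t t' ∧ IsSpread G (R.commonNeighbors t t') ∧ W = suspension R t t'

theorem suspension_comm (t t' : V) : suspension R t t' = suspension R t' t := by
  rw [suspension, suspension, Set.pair_comm, R.commonNeighbors_symm]

theorem left_mem_suspension : t ∈ suspension R t t' := by simp [suspension]

theorem right_mem_suspension : t' ∈ suspension R t t' := by simp [suspension]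

theorem commonNeighbors_subset_suspension : R.commonNeighbors t t' ⊆ suspension R t t' :=
  Set.subset_union_right

theorem mem_commonNeighbors_of_mem_suspension (h : v ∈ suspension R t t') (hne : v ≠ t)
    (hne' : v ≠ t') : v ∈ R.commonNeighbors t t' := by
  simpa [suspension, hne, hne'] using h

theorem eq_right_of_mem_suspension (hRG : R ≤ G) (hv : v ∈ suspension R t t')
    (htv : Gᶜ.Adj t v) : v = t' := by
  by_contra hne
  exact htv.2 (hRG (mem_commonNeighbors_of_mem_suspension hv htv.ne' hne).1)

theorem isSpread_of_compl_adj (huv : Gᶜ.Adj u v) (hu : u ∈ X) (hv : v ∈ X) : IsSpread G X := by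
  rintro x y hxy hX
  have := hX hu
  have := hX hv
  grind [SimpleGraph.compl_adj, SimpleGraph.adj_comm]

theorem IsSpread.mono {Y : Set V} (h : IsSpread G X) (hXY : X ⊆ Y) : IsSpread G Y :=
  fun u v huv hY ↦ h u v huv (hXY.trans hY)

theorem IsSpread.nonempty [Nonempty V] (h : IsSpread G X) : X.Nonempty := by
  obtain ⟨u⟩ := ‹Nonempty V›
  rw [Set.nonempty_iff_ne_empty]
  rintro rfl
  exact h u u (.inl rfl) (Set.empty_subset _)

theorem IsSpread.exists_compl_adj_or_injective [Nonempty V] (h : IsSpread G X) :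
    (∃ u v, Gᶜ.Adj u v ∧ X = {u, v}) ∨ ∃ x : Fin 3 → V, x.Injective ∧ ∀ i, x i ∈ X := by
  obtain ⟨u, hu⟩ := h.nonempty
  obtain ⟨v, hv, hvu⟩ : ∃ v ∈ X, v ≠ u := by
    simpa [Set.not_subset] using h u u (.inl rfl)
  by_cases hX : X ⊆ {u, v}
  · exact .inl ⟨u, v, ⟨hvu.symm, fun huv ↦ h u v (.inr huv) hX⟩,
      hX.antisymm (Set.pair_subset hu hv)⟩
  · obtain ⟨w, hw, hwuv⟩ := Set.not_subset.1 hX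
    refine .inr ⟨![u, v, w], ?_, fun i ↦ by fin_cases i <;> simpa⟩
    intro i j hij
    fin_cases i <;> fin_cases j <;> simp_all

namespace IsSquare

theorem exists_compl_adj (h : IsSquare G R a b c d) (hp : p ∈ ({a, b, c, d} : Set V)) :
    ∃ p' ∈ ({a, b, c, d} : Set V), Gᶜ.Adj p p' := by
  rcases hp with rfl | rfl | rfl | rfl
  exacts [⟨c, by simp, h.compl_adj⟩, ⟨d, by simp, h.compl_adj'⟩, ⟨a, by simp, h.compl_adj.symm⟩,
    ⟨b, by simp, h.compl_adj'.symm⟩]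

theorem subset_suspension (h : IsSquare G R a b c d) : {a, b, c, d} ⊆ suspension R a c := by
  rintro x (rfl | rfl | rfl | rfl)
  exacts [left_mem_suspension, commonNeighbors_subset_suspension h.mem, right_mem_suspension,
    commonNeighbors_subset_suspension h.mem']

theorem suspension_inter (h : IsSquare G R a b c d)
    (hdisj : Disjoint (R.commonNeighbors a c) (R.commonNeighbors b d)) :
    suspension R a c ∩ suspension R b d = {a, b, c, d} := by
  refine Set.Subset.antisymm ?_ (Set.subset_inter h.subset_suspension ?_)
  · rintro x ⟨hac | hac, hbd | hbd⟩
    · grind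
    · grind
    · grind
    · exact (hdisj.notMem_of_mem_left hac hbd).elim
  · exact rotate_square.ge.trans h.rotate.subset_suspension

theorem suspension_eq_or_of_compl_adj (hRG : R ≤ G) (h : IsSquare G R a b c d)
    (hpp' : Gᶜ.Adj p p') (hp : p ∈ ({a, b, c, d} : Set V)) (hp' : p' ∈ ({a, b, c, d} : Set V)) :
    suspension R p p' = suspension R a c ∨ suspension R p p' = suspension R b d := by
  have hnot {x y : V} (hxy : R.Adj x y) : ¬ Gᶜ.Adj x y := fun hc ↦ hc.2 (hRG hxy)
  have hab := hnot h.mem.1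
  have hcb := hnot h.mem.2
  have had := hnot h.mem'.1
  have hcd := hnot h.mem'.2
  rcases hp with rfl | rfl | rfl | rfl <;> rcases hp' with rfl | rfl | rfl | rfl <;>
    first
    | exact (hpp'.ne rfl).elim
    | exact .inl rfl
    | exact .inr rfl
    | exact .inl (suspension_comm _ _)
    | exact .inr (suspension_comm _ _)
    | grind [SimpleGraph.adj_comm]

theorem suspension_eq_or_subset_commonNeighbors (hRG : R ≤ G) (h : IsSquare G R a b c d)
    (hsub : {a, b, c, d} ⊆ suspension R t t') :
    suspension R t t' = suspension R a c ∨ suspension R t t' = suspension R b d ∨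
      {a, b, c, d} ⊆ R.commonNeighbors t t' := by
  have hpole {t t' : V} (hsub : {a, b, c, d} ⊆ suspension R t t')
      (ht : t ∈ ({a, b, c, d} : Set V)) : t' ∈ ({a, b, c, d} : Set V) ∧ Gᶜ.Adj t t' := by
    obtain ⟨p, hp, htp⟩ := h.exists_compl_adj ht
    exact eq_right_of_mem_suspension hRG (hsub hp) htp ▸ ⟨hp, htp⟩
  by_cases ht : t ∈ ({a, b, c, d} : Set V)
  · obtain ⟨ht', htt'⟩ := hpole hsub ht
    exact (h.suspension_eq_or_of_compl_adj hRG htt' ht ht').imp_right .inl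
  · have ht' : t' ∉ ({a, b, c, d} : Set V) := fun ht' ↦
      ht (hpole (suspension_comm t t' ▸ hsub) ht').1
    exact .inr (.inr fun x hx ↦ mem_commonNeighbors_of_mem_suspension (hsub hx)
      (ne_of_mem_of_not_mem hx ht) (ne_of_mem_of_not_mem hx ht'))

theorem mem_suspension_of_subset_commonNeighbors (hG : K33Free G) (hRG : R ≤ G)
    (h : IsSquare G R a b c d) (htt' : Gᶜ.Adj t t')
    (hsub : {a, b, c, d} ⊆ R.commonNeighbors t t') (hv : v ∈ R.commonNeighbors a c) :
    v ∈ suspension R t t' := by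
  have hS : IsSquare G R t b t' d :=
    ⟨htt', h.compl_adj', hsub (by simp), hsub (by simp)⟩
  have ha : a ∈ R.commonNeighbors t t' := hsub (by simp)
  have hc : c ∈ R.commonNeighbors t t' := hsub (by simp)
  by_contra hvt
  have hvS : v ∈ ({t, b, t', d}ᶜ : Set V) := by
    rintro (rfl | rfl | rfl | rfl)
    exacts [hvt left_mem_suspension, hvt (commonNeighbors_subset_suspension hS.mem),
      hvt right_mem_suspension, hvt (commonNeighbors_subset_suspension hS.mem')]
  have hoff {x : V} (hx : x ∈ R.commonNeighbors t t') (hb : x ≠ b) (hd : x ≠ d) :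
      x ∈ ({t, b, t', d}ᶜ : Set V) := by
    simp [hx.1.ne', hx.2.ne', hb, hd]
  refine (hS.mono hRG).not_joinedWithin hG ⟨hRG ha.1, hRG ha.2⟩
    ⟨hRG h.mem.2.symm, hRG h.mem'.2.symm⟩ h.compl_adj.ne ?_
  exact .cons (hRG hv.1) (hoff ha h.mem.1.ne h.mem'.1.ne) <|
    .of_adj (hRG hv.2.symm) hvS (hoff hc h.mem.2.ne h.mem'.2.ne)

theorem diagonal_subset_of_isSpread (hRG : R ≤ G) (h : IsSquare G R a b c d)
    (hX : IsSpread G X) (hsub : X ⊆ {a, b, c, d}) :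
    {a, c} ⊆ X ∨ {b, d} ⊆ X := by
  have hab := hX a b (.inr (hRG h.mem.1))
  have hcb := hX c b (.inr (hRG h.mem.2))
  have had := hX a d (.inr (hRG h.mem'.1))
  have hcd := hX c d (.inr (hRG h.mem'.2))
  simp only [Set.subset_def, Set.mem_insert_iff, Set.mem_singleton_iff] at hsub hab hcb had hcd ⊢
  grind

theorem ncard_eq (h : IsSquare G R a b c d) : ({a, b, c, d} : Set V).ncard = 4 := by
  rw [Set.ncard_insert_of_notMem, Set.ncard_insert_of_notMem, Set.ncard_pair h.mem'.2.ne]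
  · simp [h.compl_adj'.ne, h.mem.2.ne']
  · simp [h.mem.1.ne, h.compl_adj.ne, h.mem'.1.ne]

end IsSquare

end Squares

/-! ### The two sides of a gluing square -/

section Sides

variable {V : Type*} {G R : SimpleGraph V} {a b c d p p' t t' u v z z' : V} {S S₁ W W' X : Set V}

/-- `S` and `S₁` are distinct suspensions whose common part is a square having the suspension points
of each as a diagonal. -/
def Glued (G R : SimpleGraph V) (S S₁ : Set V) : Prop :=
  S ≠ S₁ ∧ ∃ a b c d, IsSquare G R a b c d ∧ S = suspension R a c ∧ S₁ = suspension R b d ∧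
    S ∩ S₁ = {a, b, c, d}

/-- `W` and `W'` are infinite suspensions whose common part is a square. -/
def MeetInSquare (G R : SimpleGraph V) (W W' : Set V) : Prop :=
  IsInfiniteSuspension G R W ∧ IsInfiniteSuspension G R W' ∧
    ∃ a b c d, IsSquare G R a b c d ∧ W ∩ W' = {a, b, c, d}

theorem Glued.symm : Glued G R S S₁ → Glued G R S₁ S := by
  rintro ⟨hne, a, b, c, d, hsq, rfl, rfl, hinter⟩
  exact ⟨hne.symm, b, c, d, a, hsq.rotate, rfl, suspension_comm a c,
    by rw [Set.inter_comm, hinter, rotate_square (a := a)]⟩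

theorem IsSquare.not_subset_commonNeighbors_of_inter_eq (hG : K33Free G) (hRG : R ≤ G)
    (h : IsSquare G R a b c d) (hS : IsInfiniteSuspension G R S)
    (hinter : S ∩ suspension R z z' = {a, b, c, d}) :
    ¬ {a, b, c, d} ⊆ R.commonNeighbors z z' := by
  intro hsub
  have hzS : z ∉ S := fun hz ↦ R.notMem_commonNeighbors_left z z' <|
    hsub (hinter ▸ ⟨hz, left_mem_suspension⟩)
  have hzac : z ∈ R.commonNeighbors a c :=
    mem_commonNeighbors_swap (hsub (by simp)) (hsub (by simp))
  have hzbd : z ∈ R.commonNeighbors b d :=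
    mem_commonNeighbors_swap (hsub (by simp)) (hsub (by simp))
  obtain ⟨t, t', htt', -, rfl⟩ := hS
  rcases h.suspension_eq_or_subset_commonNeighbors hRG
    (hinter.symm.subset.trans Set.inter_subset_left) with hac | hbd | hN
  · exact hzS (hac ▸ commonNeighbors_subset_suspension hzac)
  · exact hzS (hbd ▸ commonNeighbors_subset_suspension hzbd)
  · exact hzS (h.mem_suspension_of_subset_commonNeighbors hG hRG htt' hN hzac)

theorem MeetInSquare.glued (hG : K33Free G) (hRG : R ≤ G) (h : MeetInSquare G R S S₁)
    (hne : S ≠ S₁) : Glued G R S S₁ := by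
  obtain ⟨hS, hS₁, a, b, c, d, hsq, hinter⟩ := h
  have hpoles {T T' : Set V} (hT : IsInfiniteSuspension G R T)
      (hT' : IsInfiniteSuspension G R T') (hTT' : T ∩ T' = {a, b, c, d}) :
      T' = suspension R a c ∨ T' = suspension R b d := by
    obtain ⟨z, z', -, -, rfl⟩ := hT'
    have hsub := hTT'.symm.subset.trans Set.inter_subset_right
    have hN := hsq.not_subset_commonNeighbors_of_inter_eq hG hRG hT hTT'
    exact (hsq.suspension_eq_or_subset_commonNeighbors hRG hsub).imp_right
      fun h ↦ h.resolve_right hN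
  rcases hpoles hS₁ hS (Set.inter_comm S S₁ ▸ hinter) with hac | hbd <;>
    rcases hpoles hS hS₁ hinter with hac₁ | hbd₁
  · exact (hne (hac.trans hac₁.symm)).elim
  · exact ⟨hne, a, b, c, d, hsq, hac, hbd₁, hinter⟩
  · exact ⟨hne, b, c, d, a, hsq.rotate, hbd, hac₁.trans (suspension_comm a c),
      hinter.trans rotate_square.symm⟩
  · exact (hne (hbd.trans hbd₁.symm)).elim

/-- The vertices on the same side of `S ∩ S₁` as `S`: those joined to a vertex of `S \ S₁` by a walk
avoiding `S ∩ S₁`. -/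
def side (G : SimpleGraph V) (S S₁ : Set V) : Set V :=
  {v | ∃ w ∈ S \ S₁, JoinedWithin G (S ∩ S₁)ᶜ w v}

theorem subset_side_union_inter : S ⊆ side G S S₁ ∪ S ∩ S₁ := by
  intro v hv
  by_cases hv₁ : v ∈ S₁
  · exact .inr ⟨hv, hv₁⟩
  · exact .inl ⟨v, ⟨hv, hv₁⟩, .refl fun h ↦ hv₁ h.2⟩

theorem mem_side_of_adj (hu : u ∈ side G S S₁) (huv : G.Adj u v) (hv : v ∉ S ∩ S₁) :
    v ∈ side G S S₁ := by
  obtain ⟨w, hw, hwu⟩ := hu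
  exact ⟨w, hw, hwu.trans (.of_adj huv hwu.right_mem hv)⟩

namespace Glued

theorem disjoint_side (hG : K33Free G) (hRG : R ≤ G) (h : Glued G R S S₁) :
    Disjoint (side G S S₁) S₁ := by
  obtain ⟨-, a, b, c, d, hsq, rfl, rfl, hinter⟩ := h
  refine Set.disjoint_left.2 fun v ⟨w, hw, hwv⟩ hv ↦ ?_
  rw [hinter] at hwv
  have hwN := mem_commonNeighbors_of_mem_suspension hw.1
    (ne_of_mem_of_not_mem (by simp) hwv.left_mem).symm
    (ne_of_mem_of_not_mem (by simp) hwv.left_mem).symm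
  have hvN := mem_commonNeighbors_of_mem_suspension hv
    (ne_of_mem_of_not_mem (by simp) hwv.right_mem).symm
    (ne_of_mem_of_not_mem (by simp) hwv.right_mem).symm
  exact (hsq.mono hRG).not_joinedWithin hG ⟨hRG hwN.1, hRG hwN.2⟩ ⟨hRG hvN.1, hRG hvN.2⟩
    (ne_of_mem_of_not_mem hv hw.2).symm hwv

theorem disjoint_side_side (hG : K33Free G) (hRG : R ≤ G) (h : Glued G R S S₁) :
    Disjoint (side G S S₁) (side G S₁ S) := by
  refine Set.disjoint_left.2 fun v ⟨w, hw, hwv⟩ ⟨w₁, hw₁, hw₁v⟩ ↦ ?_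
  rw [Set.inter_comm] at hw₁v
  exact Set.disjoint_left.1 (h.disjoint_side hG hRG) ⟨w, hw, hwv.trans hw₁v.symm⟩ hw₁.1

theorem subset_inter_of_subset_sides (hG : K33Free G) (hRG : R ≤ G) (h : Glued G R S S₁)
    (hX : X ⊆ side G S S₁ ∪ S ∩ S₁) (hX₁ : X ⊆ side G S₁ S ∪ S ∩ S₁) : X ⊆ S ∩ S₁ :=
  (Set.subset_inter hX hX₁).trans <| by
    rw [← Set.inter_union_distrib_right, (h.disjoint_side_side hG hRG).inter_eq, Set.empty_union]

theorem side_subset_support (hRG : R ≤ G) (h : Glued G R S S₁) : side G S S₁ ⊆ G.support := by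
  obtain ⟨-, a, b, c, d, hsq, rfl, rfl, -⟩ := h
  rintro v ⟨w, hw, hwv⟩
  obtain rfl | hne := eq_or_ne w v
  · rcases hw.1 with (rfl | rfl) | hwN
    exacts [⟨b, hRG hsq.mem.1⟩, ⟨b, hRG hsq.mem.2⟩, ⟨a, hRG hwN.1.symm⟩]
  · exact hwv.mem_support hne

theorem suspension_eq_or (hRG : R ≤ G) (h : Glued G R S S₁) (hpp' : Gᶜ.Adj p p')
    (hp : p ∈ S ∩ S₁) (hp' : p' ∈ S ∩ S₁) : suspension R p p' = S ∨ suspension R p p' = S₁ := by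
  obtain ⟨-, a, b, c, d, hsq, rfl, rfl, hinter⟩ := h
  rw [hinter] at hp hp'
  exact hsq.suspension_eq_or_of_compl_adj hRG hpp' hp hp'

theorem mem_union_of_mem_side (hG : K33Free G) (hRG : R ≤ G) (h : Glued G R S S₁)
    (hX : X ⊆ R.commonNeighbors p p') (hspread : IsSpread G X) (hp : p ∈ side G S S₁) :
    p' ∈ side G S S₁ ∪ S ∩ S₁ := by
  by_contra hp'
  rw [Set.mem_union, not_or] at hp'
  have hXsub : X ⊆ S ∩ S₁ := by
    intro x hx
    by_contra hxc
    have hxside := mem_side_of_adj hp (hRG (hX hx).1) hxc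
    exact hp'.1 (mem_side_of_adj hxside (hRG (hX hx).2.symm) hp'.2)
  have hdisj := h.disjoint_side hG hRG
  obtain ⟨-, a, b, c, d, hsq, hS, hS₁, hinter⟩ := h
  rcases hsq.diagonal_subset_of_isSpread hRG hspread (hinter ▸ hXsub) with hac | hbd
  · have hp'S : p' ∈ S := hS ▸ commonNeighbors_subset_suspension
      ⟨(hX (hac (by simp))).2.symm, (hX (hac (by simp))).2.symm⟩
    exact (subset_side_union_inter hp'S).elim hp'.1 hp'.2
  · have hpS₁ : p ∈ S₁ := hS₁ ▸ commonNeighbors_subset_suspension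
      (mem_commonNeighbors_swap (hX (hbd (by simp))) (hX (hbd (by simp))))
    exact Set.disjoint_left.1 hdisj hp hpS₁

theorem subset_or_disjoint_of_notMem (hG : K33Free G) (hRG : R ≤ G) (h : Glued G R S S₁)
    (hX : X ⊆ R.commonNeighbors p p') (hspread : IsSpread G X) (hp : p ∉ S ∩ S₁) :
    {p, p'} ∪ X ⊆ side G S S₁ ∪ S ∩ S₁ ∨ Disjoint ({p, p'} ∪ X) (side G S S₁) := by
  by_cases hps : p ∈ side G S S₁
  · left
    rintro x ((rfl | rfl) | hx)
    · exact .inl hps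
    · exact h.mem_union_of_mem_side hG hRG hX hspread hps
    · exact or_iff_not_imp_right.2 fun hxc ↦ mem_side_of_adj hps (hRG (hX hx).1) hxc
  · refine .inr (Set.disjoint_left.2 ?_)
    rintro x ((rfl | rfl) | hx) hxs
    · exact hps hxs
    · rw [R.commonNeighbors_symm] at hX
      exact (h.mem_union_of_mem_side hG hRG hX hspread hxs).elim hps hp
    · exact hps (mem_side_of_adj hxs (hRG (hX hx).1.symm) hp)

theorem subset_or_disjoint (hG : K33Free G) (hRG : R ≤ G) (h : Glued G R S S₁)
    (hpp' : Gᶜ.Adj p p') (hX : X ⊆ R.commonNeighbors p p') (hspread : IsSpread G X) :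
    {p, p'} ∪ X ⊆ side G S S₁ ∪ S ∩ S₁ ∨ Disjoint ({p, p'} ∪ X) (side G S S₁) := by
  by_cases hp : p ∈ S ∩ S₁
  · by_cases hp' : p' ∈ S ∩ S₁
    · have hsub : {p, p'} ∪ X ⊆ suspension R p p' := Set.union_subset_union_right _ hX
      rcases h.suspension_eq_or hRG hpp' hp hp' with hS | hS₁
      · exact .inl (hS ▸ hsub |>.trans subset_side_union_inter)
      · exact .inr ((h.disjoint_side hG hRG).symm.mono_left (hS₁ ▸ hsub))
    · rw [R.commonNeighbors_symm] at hX
      rw [Set.pair_comm]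
      exact h.subset_or_disjoint_of_notMem hG hRG hX hspread hp'
  · exact h.subset_or_disjoint_of_notMem hG hRG hX hspread hp

theorem suspension_subset_or_disjoint (hG : K33Free G) (hRG : R ≤ G) (h : Glued G R S S₁)
    (hW : IsInfiniteSuspension G R W) :
    W ⊆ side G S S₁ ∪ S ∩ S₁ ∨ Disjoint W (side G S S₁) := by
  obtain ⟨t, t', htt', hspread, rfl⟩ := hW
  exact h.subset_or_disjoint hG hRG htt' subset_rfl hspread

theorem square_subset_or_disjoint (hG : K33Free G) (hRG : R ≤ G) (h : Glued G R S S₁)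
    (hsq : IsSquare G R a b c d) :
    {a, b, c, d} ⊆ side G S S₁ ∪ S ∩ S₁ ∨ Disjoint {a, b, c, d} (side G S S₁) := by
  have hunion : ({a, b, c, d} : Set V) = {a, c} ∪ {b, d} := by grind
  rw [hunion]
  exact h.subset_or_disjoint hG hRG hsq.compl_adj (Set.pair_subset hsq.mem hsq.mem')
    (isSpread_of_compl_adj hsq.compl_adj' (by simp) (by simp))

theorem eq_or_eq_of_inter_subset (hRG : R ≤ G) (h : Glued G R S S₁)
    (hW : IsInfiniteSuspension G R W) (hsub : S ∩ S₁ ⊆ W) : W = S ∨ W = S₁ := by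
  obtain ⟨-, a, b, c, d, hsq, rfl, rfl, hinter⟩ := h
  obtain ⟨t, t', -, -, rfl⟩ := hW
  rw [hinter] at hsub
  rcases hsq.suspension_eq_or_subset_commonNeighbors hRG hsub with hac | hbd | hN
  · exact .inl hac
  · exact .inr hbd
  · have htac := mem_commonNeighbors_swap (hN (a := a) (by simp)) (hN (a := c) (by simp))
    have htbd := mem_commonNeighbors_swap (hN (a := b) (by simp)) (hN (a := d) (by simp))
    have ht : t ∈ ({a, b, c, d} : Set V) := hinter ▸
      ⟨commonNeighbors_subset_suspension htac, commonNeighbors_subset_suspension htbd⟩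
    exact (R.notMem_commonNeighbors_left t t' (hN ht)).elim

theorem eq_or_eq_of_meetInSquare (hRG : R ≤ G) (h : Glued G R S S₁) (hWW' : MeetInSquare G R W W')
    (hW : W ⊆ side G S S₁ ∪ S ∩ S₁) (hW' : Disjoint W' (side G S S₁)) : W' = S ∨ W' = S₁ := by
  refine h.eq_or_eq_of_inter_subset hRG hWW'.2.1 ?_
  have hsub : W ∩ W' ⊆ S ∩ S₁ := fun v hv ↦
    (hW hv.1).resolve_left (Set.disjoint_left.1 hW' hv.2)
  obtain ⟨-, a, b, c, d, hsq, -, -, hinter⟩ := h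
  obtain ⟨-, -, a', b', c', d', hsq', hinter'⟩ := hWW'
  have heq : W ∩ W' = S ∩ S₁ := by
    rw [hinter, hinter'] at hsub ⊢
    exact Set.eq_of_subset_of_ncard_le hsub (hsq.ncard_eq.trans hsq'.ncard_eq.symm).le
  exact heq ▸ Set.inter_subset_right

end Glued

end Sides

/-! ### Chains of glued suspensions -/

section Chains

variable {V : Type*} {G R : SimpleGraph V} {S S₁ S₂ : Set V} {a b c d t t' : V}

theorem Glued.side_ssubset_of_notMem (hG : K33Free G) (hRG : R ≤ G) (h : Glued G R S S₁)
    (hS : S = suspension R t t') (ht : t ∈ S₁) (ht' : t' ∈ S₁) (ht₂ : t ∉ S₂) :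
    side G S S₁ ⊂ side G S₁ S₂ := by
  have hdisj : Disjoint (side G S S₁) S₁ := h.disjoint_side hG hRG
  have hts : t ∈ side G S₁ S₂ := (subset_side_union_inter ht).resolve_right fun h ↦ ht₂ h.2
  have hoff {x : V} (hx : x ∈ side G S S₁) : x ∉ S₁ ∩ S₂ := fun hx₁ ↦
    Set.disjoint_left.1 hdisj hx hx₁.1
  refine (Set.ssubset_iff_of_subset ?_).2 ⟨t, hts, fun h ↦ Set.disjoint_left.1 hdisj h ht⟩
  rintro v ⟨w, ⟨hwS, hw₁⟩, P, hP⟩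
  have hwside : w ∈ side G S S₁ := ⟨w, ⟨hwS, hw₁⟩, .refl fun h ↦ hw₁ h.2⟩
  have htw : R.Adj t w := (mem_commonNeighbors_of_mem_suspension (hS ▸ hwS)
    (ne_of_mem_of_not_mem ht hw₁).symm (ne_of_mem_of_not_mem ht' hw₁).symm).1
  have hw₂ : w ∈ side G S₁ S₂ := mem_side_of_adj hts (hRG htw) (hoff hwside)
  clear htw hwS hw₁
  induction P with
  | nil => exact hw₂
  | cons hadj P ih =>
    have hxside := mem_side_of_adj hwside hadj (hP _ (by simp))
    exact ih (fun x hx ↦ hP x (by simp [hx])) hxside (mem_side_of_adj hw₂ hadj (hoff hxside))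

theorem Glued.side_ssubset (hG : K33Free G) (hRG : R ≤ G) (h : Glued G R S S₁)
    (h₁ : Glued G R S₁ S₂) (hne : S₂ ≠ S) : side G S S₁ ⊂ side G S₁ S₂ := by
  obtain ⟨hSS₁, a, b, c, d, hsq, hS, -, hinter⟩ := id h
  have ha : a ∈ S₁ := Set.inter_subset_right (hinter ▸ by simp : a ∈ S ∩ S₁)
  have hc : c ∈ S₁ := Set.inter_subset_right (hinter ▸ by simp : c ∈ S ∩ S₁)
  by_cases ha₂ : a ∈ S₂
  · by_cases hc₂ : c ∈ S₂
    · rcases h₁.suspension_eq_or hRG hsq.compl_adj ⟨ha, ha₂⟩ ⟨hc, hc₂⟩ with heq | heq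
      · exact (hSS₁ (hS.trans heq)).elim
      · exact (hne (heq.symm.trans hS.symm)).elim
    · exact h.side_ssubset_of_notMem hG hRG (hS.trans (suspension_comm a c)) hc ha hc₂
  · exact h.side_ssubset_of_notMem hG hRG hS ha hc ha₂

variable {ι : Type*} {r : ι → ι → Prop} {W : ι → Set V} {i j : ι}

open Relation (ReflTransGen)

theorem exists_glued_of_reflTransGen (hG : K33Free G) (hRG : R ≤ G)
    (hr : ∀ i j, r i j → MeetInSquare G R (W i) (W j)) (hij : ReflTransGen r i j)
    (hne : W j ≠ W i) :
    ∃ k, ReflTransGen r i k ∧ Glued G R (W i) (W k) ∧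
      W j ⊆ side G (W k) (W i) ∪ W k ∩ W i := by
  induction hij with
  | refl => exact (hne rfl).elim
  | @tail j j' hij hjj' ih =>
    by_cases hj : W j = W i
    · exact ⟨j', hij.tail hjj', hj ▸ (hr j j' hjj').glued hG hRG (hj ▸ hne.symm),
        subset_side_union_inter⟩
    obtain ⟨k, hik, hglued, hsub⟩ := ih hj
    have hmeet := hr j j' hjj'
    rcases hglued.symm.suspension_subset_or_disjoint hG hRG hmeet.2.1 with hsub' | hdisj
    · exact ⟨k, hik, hglued, hsub'⟩
    · rcases hglued.symm.eq_or_eq_of_meetInSquare hRG hmeet hsub hdisj with heq | heq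
      · exact ⟨k, hik, hglued, heq ▸ subset_side_union_inter⟩
      · exact (hne heq).elim

theorem exists_glued_square_subset (hG : K33Free G) (hRG : R ≤ G)
    (hr : ∀ i j, r i j → MeetInSquare G R (W i) (W j)) (hsq : IsSquare G R a b c d)
    (hcover : ∀ v ∈ ({a, b, c, d} : Set V), ∃ j, ReflTransGen r i j ∧ v ∈ W j)
    (hnot : ¬ {a, b, c, d} ⊆ W i) :
    ∃ k, ReflTransGen r i k ∧ Glued G R (W i) (W k) ∧
      {a, b, c, d} ⊆ side G (W k) (W i) ∪ W k ∩ W i := by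
  obtain ⟨v, hv, hvi⟩ := Set.not_subset.1 hnot
  obtain ⟨j, hij, hvj⟩ := hcover v hv
  obtain ⟨k, hik, hglued, hsub⟩ := exists_glued_of_reflTransGen hG hRG hr hij
    (fun h ↦ hvi (h ▸ hvj))
  have hvside : v ∈ side G (W k) (W i) := (hsub hvj).resolve_right fun h ↦ hvi h.2
  exact ⟨k, hik, hglued, (hglued.symm.square_subset_or_disjoint hG hRG hsq).resolve_right
    fun hdisj ↦ Set.disjoint_left.1 hdisj hv hvside⟩

-- If no member contains the square, then from each member one can step to a neighbor towards the
-- square without ever turning back, and the sides left behind grow forever.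
theorem exists_square_subset (hG : K33Free G) (hRG : R ≤ G) (hfin : G.support.Finite)
    [Std.Symm r] (hr : ∀ i j, r i j → MeetInSquare G R (W i) (W j))
    (hsq : IsSquare G R a b c d)
    (hcover : ∀ v ∈ ({a, b, c, d} : Set V), ∃ j, ReflTransGen r i j ∧ v ∈ W j) :
    ∃ j, ReflTransGen r i j ∧ {a, b, c, d} ⊆ W j := by
  by_contra! hnot
  have hstep (j) (hij : ReflTransGen r i j) : ∃ k, ReflTransGen r i k ∧ Glued G R (W j) (W k) ∧
      {a, b, c, d} ⊆ side G (W k) (W j) ∪ W k ∩ W j := by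
    have hji : ReflTransGen r j i := symm hij
    obtain ⟨k, hjk, h⟩ := exists_glued_square_subset hG hRG hr hsq
      (fun v hv ↦ (hcover v hv).imp fun _ ↦ .imp_left hji.trans) (hnot j hij)
    exact ⟨k, hij.trans hjk, h⟩
  let sides : Set (Set V) := {A | ∃ j k, ReflTransGen r i j ∧ ReflTransGen r i k ∧
    Glued G R (W j) (W k) ∧ {a, b, c, d} ⊆ side G (W k) (W j) ∪ W k ∩ W j ∧
    A = side G (W j) (W k)}
  have hsides : sides.Finite := by
    refine hfin.finite_subsets.subset ?_
    rintro _ ⟨j, k, -, -, hglued, -, rfl⟩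
    exact hglued.side_subset_support hRG
  have hnonempty : sides.Nonempty :=
    let ⟨k, hik, hglued, hsub⟩ := hstep i .refl
    ⟨_, i, k, .refl, hik, hglued, hsub, rfl⟩
  obtain ⟨_, ⟨j, k, hij, hik, hjk, hsub, rfl⟩, hmax⟩ := hsides.exists_maximal hnonempty
  obtain ⟨l, hil, hkl, hsub'⟩ := hstep k hik
  have hne : W l ≠ W j := fun heq ↦ hnot j hij <|
    (hjk.subset_inter_of_subset_sides hG hRG (heq ▸ hsub') (Set.inter_comm _ _ ▸ hsub)).trans
      Set.inter_subset_left
  have hlt := hjk.side_ssubset hG hRG hkl hne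
  exact hlt.2 (hmax ⟨k, l, hik, hil, hkl, hsub', rfl⟩ hlt.1)

end Chains

/-! ### Suspensions in a metric flag triangulation -/

section Labels

variable {L : SimplicialComplex ℝ E3} {m : E3 → E3 → ℕ} {t a b u v : E3}

/-- The graph of edges of `L` labeled `2`. Both `m u v` and `m v u` are required to be `2`, so that
adjacency is symmetric for any `m`. -/
def rightAngledGraph (L : SimplicialComplex ℝ E3) (m : E3 → E3 → ℕ) : SimpleGraph E3 where
  Adj u v := (skeleton L).Adj u v ∧ m u v = 2 ∧ m v u = 2
  symm := ⟨fun _ _ ⟨h, huv, hvu⟩ ↦ ⟨h.symm, hvu, huv⟩⟩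
  loopless := ⟨fun _ h ↦ h.1.ne rfl⟩

theorem rightAngledGraph_le_skeleton : rightAngledGraph L m ≤ skeleton L :=
  fun _ _ h ↦ h.1

theorem IsLabeledS2.rightAngledGraph_adj (hL : IsLabeledS2 L m) (huv : u ≠ v)
    (h : {u, v} ∈ L.faces) (hm : m u v = 2) : (rightAngledGraph L m).Adj u v :=
  ⟨⟨huv, h⟩, hm, hL.symm u v ▸ hm⟩

theorem IsLabeledS2.incidenceGraph_k33Free (hL : IsLabeledS2 L m) : K33Free (incidenceGraph L) :=
  let ⟨e⟩ := hL.sphere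
  CoxOrb.incidenceGraph_k33Free hL.finite e

theorem insert_pair_mem_faces (hL : IsLabeledS2 L m) (hflag : MetricFlag L m)
    (hta : (rightAngledGraph L m).Adj t a) (htb : (rightAngledGraph L m).Adj t b)
    (hab : (skeleton L).Adj a b) : {t, a, b} ∈ L.faces := by
  rw [hflag t a b hta.ne hab.1 htb.ne hta.1.2 hab.2 htb.1.2, hta.2.1, htb.2.2]
  have hpos : (0 : ℝ) < m a b := by
    exact_mod_cast two_pos.trans_le (hL.two_le a b hab.1 hab.2)
  have := one_div_pos.2 hpos
  push_cast
  linarith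

theorem IsEuclidean4Circuit.isSquare (hL : IsLabeledS2 L m) (hflag : MetricFlag L m)
    {v : Fin 4 → E3} (hv : IsEuclidean4Circuit L m v) :
    IsSquare (skeleton L) (rightAngledGraph L m) (v 0) (v 1) (v 2) (v 3) := by
  obtain ⟨hinj, hface, hm, hfill⟩ := hv
  have hadj (i : Fin 4) : (rightAngledGraph L m).Adj (v i) (v (i + 1)) :=
    hL.rightAngledGraph_adj (hinj.ne (by simp)) (hface i) (hm i)
  have h01 := hadj 0
  have h12 := hadj 1
  have h23 := hadj 2
  have h30 := hadj 3
  simp only [Fin.reduceAdd, zero_add] at h01 h12 h23 h30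
  refine ⟨⟨hinj.ne (by decide), fun h02 ↦ hfill (.inl ⟨?_, ?_⟩)⟩,
    ⟨hinj.ne (by decide), fun h13 ↦ hfill (.inr ⟨?_, ?_⟩)⟩, ⟨h01, h12.symm⟩, ⟨h30.symm, h23⟩⟩
  · exact Finset.insert_comm (v 1) (v 0) {v 2} ▸ insert_pair_mem_faces hL hflag h01.symm h12 h02
  · have := insert_pair_mem_faces hL hflag h30 h23.symm h02
    rwa [Finset.insert_comm, Finset.pair_comm (v 3)] at this
  · exact Finset.insert_comm (v 2) (v 1) {v 3} ▸ insert_pair_mem_faces hL hflag h12.symm h23 h13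
  · exact insert_pair_mem_faces hL hflag h01 h30.symm h13

end Labels

section FullSubcomplexes

variable {E : Type*} [AddCommGroup E] [Module ℝ E] {L : SimplicialComplex ℝ E} {F : Finset E}
  {S : Set (Finset E)} {X Y : Set E} {t t' u v : E}

/-- The vertices of a set of simplices. -/
def vertexSet (S : Set (Finset E)) : Set E :=
  {v | {v} ∈ S}

theorem vertexSet_fullSubcomplex (hX : X ⊆ vertexSet L.faces) :
    vertexSet (fullSubcomplex L X) = X :=
  Set.ext fun _ ↦ ⟨fun hv ↦ hv.2 (by simp), fun hv ↦ ⟨hX hv, by simpa using hv⟩⟩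

theorem fullSubcomplex_mono (hXY : X ⊆ Y) : fullSubcomplex L X ⊆ fullSubcomplex L Y :=
  fun _ hF ↦ ⟨hF.1, hF.2.trans hXY⟩

theorem fullSubcomplex_subset_iff (hX : X ⊆ vertexSet L.faces) :
    fullSubcomplex L X ⊆ fullSubcomplex L Y ↔ X ⊆ Y :=
  ⟨fun h _ hv ↦ (h ⟨hX hv, by simpa using hv⟩).2 (by simp), fullSubcomplex_mono⟩

theorem fullSubcomplex_inter :
    fullSubcomplex L X ∩ fullSubcomplex L Y = fullSubcomplex L (X ∩ Y) :=
  Set.ext fun _ ↦ ⟨fun ⟨⟨hF, hX⟩, _, hY⟩ ↦ ⟨hF, Set.subset_inter hX hY⟩, fun ⟨hF, hXY⟩ ↦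
    ⟨⟨hF, hXY.trans Set.inter_subset_left⟩, hF, hXY.trans Set.inter_subset_right⟩⟩

theorem fullSubcomplex_singleton (hv : v ∈ vertexSet L.faces) :
    fullSubcomplex L {v} = {{v}} := by
  refine Set.Subset.antisymm (fun F hF ↦ ?_) (Set.singleton_subset_iff.2 ⟨hv, by simp⟩)
  exact (L.nonempty_of_mem_faces hF.1).subset_singleton_iff.1 (by exact_mod_cast hF.2)

variable [DecidableEq E]

theorem skeleton_support_subset : (skeleton L).support ⊆ vertexSet L.faces :=
  fun _ ⟨_, h⟩ ↦ vertex_of_skeleton_adj h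

theorem skeleton_support_finite (hfin : L.faces.Finite) : (skeleton L).support.Finite :=
  (hfin.preimage Finset.singleton_injective.injOn).subset skeleton_support_subset

theorem fullSubcomplex_pair (h : (skeleton L).Adj u v) :
    fullSubcomplex L {u, v} = {{u}, {v}, {u, v}} := by
  ext F
  constructor
  · rintro ⟨hF, hsub⟩
    have hne := L.nonempty_of_mem_faces hF
    have hsub' : ∀ x ∈ F, x = u ∨ x = v := fun x hx ↦ hsub hx
    grind
  · rintro (rfl | rfl | rfl)
    exacts [⟨vertex_of_skeleton_adj h, by simp⟩, ⟨vertex_of_skeleton_adj h.symm, by simp⟩,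
      ⟨h.2, by simp⟩]

theorem card_le_two_of_subset_commonNeighbors (h : K33Free (incidenceGraph L)) (htt' : t ≠ t')
    (hF : F ∈ fullSubcomplex L ((skeleton L).commonNeighbors t t')) : F.card ≤ 2 := by
  by_contra! hcard
  obtain ⟨q⟩ := Function.Embedding.nonempty_of_card_le
    (α := Fin 3) (β := F) (by simpa using Nat.succ_le_iff.2 hcard)
  have hq (j) : (q j : E) ∈ (skeleton L).commonNeighbors t t' := hF.2 (q j).2
  have hqinj {j j'} (hj : j ≠ j') : (q j : E) ≠ q j' := Subtype.coe_ne_coe.2 (q.injective.ne hj)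
  have hp : (![t, t'] : Fin 2 → E).Injective := injective_pair_iff_ne.2 htt'
  have hadj (i j) : (skeleton L).Adj (![t, t'] i) (q j) := by
    fin_cases i
    exacts [(hq j).1, (hq j).2]
  refine false_of_two_cones_over_face h hF.1 (p := ![t, t']) (q := fun j ↦ q j)
    (B := fun i j ↦ {![t, t'] i, (q j : E)}) (fun j ↦ (q j).2)
    (fun i j ↦ .of_adj (hadj i j) (by simp) (by simp)) (fun i i' j j' hi hj ↦ ?_)
    fun i j j' hj ↦ ?_
  · have := hp.ne hi
    have := hqinj hj
    have := (hadj i j').ne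
    have := (hadj i' j).ne
    simp only [Set.disjoint_left, Set.mem_insert_iff, Set.mem_singleton_iff]
    grind
  · simp [hqinj hj, (hadj i j).ne']

theorem false_of_three_triangles_on_edge (h : K33Free (incidenceGraph L)) (htt' : t ≠ t')
    {a : Fin 3 → E} (ha : a.Injective) (hat : ∀ i, a i ≠ t) (hat' : ∀ i, a i ≠ t')
    (hface : ∀ i, {a i, t, t'} ∈ L.faces) : False := by
  refine false_of_join_mem h (q := ![{t}, {t'}, {t, t'}]) ha ?_ (fun i j ↦ ?_) (fun j ↦ ?_)
    fun i j ↦ L.down_closed (hface i) ?_ (by simp)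
  · intro j j' hj
    fin_cases j <;> fin_cases j' <;> simp_all [Finset.ext_iff]
  · fin_cases j <;> simp [hat, hat']
  · fin_cases j <;> simp
  · fin_cases j <;> simp

end FullSubcomplexes

section RightAngledSuspensions

variable {L : SimplicialComplex ℝ E3} {m : E3 → E3 → ℕ} {F : Finset E3} {T Z : Set (Finset E3)}
  {X : Set E3} {t t' u v : E3}

theorem isFullSubcomplex_fullSubcomplex : IsFullSubcomplex L (fullSubcomplex L X) :=
  ⟨fun _ hF ↦ hF.1, fun _ hF hFX ↦ ⟨hF, fun v hv ↦ (hFX v hv).2 (by simp)⟩⟩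

theorem infiniteBase_fullSubcomplex_iff (hX : X ⊆ vertexSet L.faces) (hne : X.Nonempty) :
    InfiniteBase (fullSubcomplex L X) ↔ IsSpread (skeleton L) X := by
  constructor
  · rintro ⟨hvertex, hedge⟩ u v huv hsub
    have hsingle {w} : X ≠ {w} := by
      rintro rfl
      exact hvertex ⟨w, fullSubcomplex_singleton (hX rfl)⟩
    rcases huv with rfl | huv
    · exact hsingle (hne.subset_singleton_iff.1 (by simpa using hsub))
    · rcases hne.subset_pair_iff_eq.1 hsub with h | h | rfl
      exacts [hsingle h, hsingle h, hedge ⟨u, v, huv.ne, fullSubcomplex_pair huv⟩]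
  · refine fun h ↦ ⟨?_, ?_⟩
    · rintro ⟨v, hv⟩
      refine h v v (.inl rfl) ?_
      rw [← vertexSet_fullSubcomplex hX, hv]
      exact fun w hw ↦ .inl (Finset.singleton_injective hw)
    · rintro ⟨u, v, huv, heq⟩
      refine h u v (.inr ⟨huv, (heq ▸ by simp : {u, v} ∈ fullSubcomplex L X).1⟩) ?_
      rw [← vertexSet_fullSubcomplex hX, heq]
      rintro w (hw | hw | (hw : ({w} : Finset E3) = {u, v}))
      · exact .inl (Finset.singleton_injective hw)
      · exact .inr (Finset.singleton_injective hw)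
      · exact .inl (Finset.mem_singleton.1 (hw ▸ by simp : u ∈ {w})).symm

theorem commonNeighbors_subset_vertexSet :
    (rightAngledGraph L m).commonNeighbors t t' ⊆ vertexSet L.faces :=
  fun _ hv ↦ vertex_of_skeleton_adj hv.1.1.symm

theorem suspension_subset_vertexSet (hne : ((rightAngledGraph L m).commonNeighbors t t').Nonempty) :
    suspension (rightAngledGraph L m) t t' ⊆ vertexSet L.faces := by
  obtain ⟨v, hv⟩ := hne
  exact Set.union_subset (Set.pair_subset (vertex_of_skeleton_adj hv.1.1)
    (vertex_of_skeleton_adj hv.2.1)) commonNeighbors_subset_vertexSet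

theorem insert_mem_faces (hL : IsLabeledS2 L m) (hflag : MetricFlag L m) (htt' : t ≠ t')
    (hF : F ∈ fullSubcomplex L ((rightAngledGraph L m).commonNeighbors t t')) :
    insert t F ∈ L.faces := by
  have hcard : F.card ≤ 2 := card_le_two_of_subset_commonNeighbors hL.incidenceGraph_k33Free htt'
    ⟨hF.1, fun v hv ↦ ⟨(hF.2 hv).1.1, (hF.2 hv).2.1⟩⟩
  have hpos := (L.nonempty_of_mem_faces hF.1).card_pos
  obtain hcard | hcard : F.card = 1 ∨ F.card = 2 := by lia
  · obtain ⟨a, rfl⟩ := Finset.card_eq_one.1 hcard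
    exact (hF.2 (by simp)).1.1.2
  · obtain ⟨a, b, hab, rfl⟩ := Finset.card_eq_two.1 hcard
    exact insert_pair_mem_faces hL hflag (hF.2 (by simp)).1 (hF.2 (by simp)).1 ⟨hab, hF.1⟩

theorem eq_singleton_or_exists_insert_eq (htt' : (skeleton L)ᶜ.Adj t t')
    (hF : F ∈ fullSubcomplex L (suspension (rightAngledGraph L m) t t')) (ht : t ∈ F) :
    F = {t} ∨ ∃ G ∈ fullSubcomplex L ((rightAngledGraph L m).commonNeighbors t t'),
      insert t G = F := by
  have ht' : t' ∉ F := fun ht' ↦ htt'.2 (skeleton_adj_of_mem hF.1 ht ht' htt'.1)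
  rcases (F.erase t).eq_empty_or_nonempty with hempty | hne
  · exact .inl (((Finset.erase_eq_empty_iff F t).1 hempty).resolve_left (Finset.ne_empty_of_mem ht))
  · refine .inr ⟨F.erase t, ⟨L.down_closed hF.1 (F.erase_subset t) hne, fun v hv ↦ ?_⟩,
      Finset.insert_erase ht⟩
    obtain ⟨hvt, hvF⟩ := Finset.mem_erase.1 hv
    exact mem_commonNeighbors_of_mem_suspension (hF.2 hvF) hvt (ne_of_mem_of_not_mem hvF ht')

theorem fullSubcomplex_suspension_eq_joinSusp (hL : IsLabeledS2 L m) (hflag : MetricFlag L m)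
    (htt' : (skeleton L)ᶜ.Adj t t') (hne : ((rightAngledGraph L m).commonNeighbors t t').Nonempty) :
    fullSubcomplex L (suspension (rightAngledGraph L m) t t') =
      joinSusp (fullSubcomplex L ((rightAngledGraph L m).commonNeighbors t t')) t t' := by
  have hpole {t t'} (h : t ≠ t') :
      (insert t ·) '' fullSubcomplex L ((rightAngledGraph L m).commonNeighbors t t') ⊆
        fullSubcomplex L (suspension (rightAngledGraph L m) t t') := by
    rintro _ ⟨F, hF, rfl⟩
    refine ⟨insert_mem_faces hL hflag h hF, ?_⟩
    simpa [Set.insert_subset_iff, left_mem_suspension] using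
      hF.2.trans commonNeighbors_subset_suspension
  have hvert := suspension_subset_vertexSet hne
  refine Set.Subset.antisymm (fun F hF ↦ ?_) <| Set.union_subset (Set.union_subset
    (Set.union_subset (fullSubcomplex_mono commonNeighbors_subset_suspension) ?_) (hpole htt'.1)) ?_
  · by_cases ht : t ∈ F
    · exact .inl ((eq_singleton_or_exists_insert_eq htt' hF ht).imp (fun h ↦ .inr (.inl h)) id)
    by_cases ht' : t' ∈ F
    · rw [suspension_comm] at hF
      have := eq_singleton_or_exists_insert_eq htt'.symm hF ht'
      rw [SimpleGraph.commonNeighbors_symm] at this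
      exact this.imp (fun h ↦ .inl (.inr (.inr h))) id
    · exact .inl <| .inl <| .inl ⟨hF.1, fun v hv ↦ mem_commonNeighbors_of_mem_suspension (hF.2 hv)
        (ne_of_mem_of_not_mem hv ht) (ne_of_mem_of_not_mem hv ht')⟩
  · exact Set.pair_subset ⟨hvert left_mem_suspension, by simp [left_mem_suspension]⟩
      ⟨hvert right_mem_suspension, by simp [right_mem_suspension]⟩
  · rw [suspension_comm, SimpleGraph.commonNeighbors_symm]
    exact hpole htt'.ne'

theorem isRASuspData_fullSubcomplex (hL : IsLabeledS2 L m) (hflag : MetricFlag L m)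
    (htt' : (skeleton L)ᶜ.Adj t t') (hne : ((rightAngledGraph L m).commonNeighbors t t').Nonempty) :
    IsRASuspData L m (fullSubcomplex L (suspension (rightAngledGraph L m) t t'))
      (fullSubcomplex L ((rightAngledGraph L m).commonNeighbors t t')) t t' where
  subset _ hF := hF.1
  zsubset _ hF := hF.1
  zdown _ hF _ hGF hG := ⟨L.down_closed hF.1 hGF hG, (Finset.coe_subset.2 hGF).trans hF.2⟩
  znonempty :=
    let ⟨v, hv⟩ := hne
    ⟨{v}, commonNeighbors_subset_vertexSet hv, by simpa using hv⟩
  tne := htt'.1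
  t_notin _ hF ht := SimpleGraph.notMem_commonNeighbors_left _ t t' (hF.2 ht)
  t'_notin _ hF ht' := SimpleGraph.notMem_commonNeighbors_right _ t t' (hF.2 ht')
  labels v hv :=
    have hvN := hv.2 (Finset.mem_singleton_self v)
    ⟨hvN.1.2.1, hvN.2.2.1⟩
  eq := fullSubcomplex_suspension_eq_joinSusp hL hflag htt' hne

namespace IsRASuspData

theorem singleton_mem_base (h : IsRASuspData L m T Z t t') (hF : F ∈ Z) (hv : v ∈ F) :
    v ∈ vertexSet Z :=
  h.zdown F hF _ (by simpa using hv) (by simp)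

theorem base_eq (h : IsRASuspData L m T Z t t') (hfull : IsFullSubcomplex L Z) :
    Z = fullSubcomplex L (vertexSet Z) :=
  Set.Subset.antisymm (fun _ hF ↦ ⟨h.zsubset hF, fun _ hv ↦ h.singleton_mem_base hF hv⟩)
    fun F hF ↦ hfull.2 F hF.1 fun _ hv ↦ hF.2 hv

theorem insert_left_mem (h : IsRASuspData L m T Z t t') (hF : F ∈ Z) : insert t F ∈ T :=
  h.eq ▸ .inl (.inr ⟨F, hF, rfl⟩)

theorem insert_right_mem (h : IsRASuspData L m T Z t t') (hF : F ∈ Z) : insert t' F ∈ T :=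
  h.eq ▸ .inr ⟨F, hF, rfl⟩

theorem vertexSet_base_subset (hL : IsLabeledS2 L m) (h : IsRASuspData L m T Z t t') :
    vertexSet Z ⊆ (rightAngledGraph L m).commonNeighbors t t' := fun v hv ↦ by
  have hne := h.t_notin _ hv
  have hne' := h.t'_notin _ hv
  rw [Finset.mem_singleton] at hne hne'
  exact ⟨hL.rightAngledGraph_adj hne (h.subset (h.insert_left_mem hv)) (h.labels v hv).1,
    hL.rightAngledGraph_adj hne' (h.subset (h.insert_right_mem hv)) (h.labels v hv).2⟩

theorem subset_fullSubcomplex (hL : IsLabeledS2 L m) (h : IsRASuspData L m T Z t t') :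
    T ⊆ fullSubcomplex L (suspension (rightAngledGraph L m) t t') := by
  refine fun F hF ↦ ⟨h.subset hF, ?_⟩
  have hZ {G} (hG : G ∈ Z) : (G : Set E3) ⊆ suspension (rightAngledGraph L m) t t' := fun v hv ↦
    commonNeighbors_subset_suspension <|
      h.vertexSet_base_subset hL (h.singleton_mem_base hG hv)
  rw [h.eq] at hF
  obtain ((hF | rfl | rfl) | ⟨G, hG, rfl⟩) | ⟨G, hG, rfl⟩ := hF
  · exact hZ hF
  · simp [left_mem_suspension]
  · simp [right_mem_suspension]
  · simp [Set.insert_subset_iff, left_mem_suspension, hZ hG]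
  · simp [Set.insert_subset_iff, right_mem_suspension, hZ hG]

theorem right_notMem (h : IsRASuspData L m T Z t t') (hF : F ∈ T) (ht : t ∈ F) : t' ∉ F := by
  intro ht'
  have htt' := h.tne
  rw [h.eq] at hF
  obtain ((hF | rfl | rfl) | ⟨G, hG, rfl⟩) | ⟨G, hG, rfl⟩ := hF
  · exact h.t_notin F hF ht
  · exact htt' (Finset.mem_singleton.1 ht').symm
  · exact htt' (Finset.mem_singleton.1 ht)
  · exact h.t'_notin G hG (Finset.mem_of_mem_insert_of_ne ht' htt'.symm)
  · exact h.t_notin G hG (Finset.mem_of_mem_insert_of_ne ht htt')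

end IsRASuspData

end RightAngledSuspensions

section MaximalSuspensions

variable {L : SimplicialComplex ℝ E3} {m : E3 → E3 → ℕ} {S S' T Z : Set (Finset E3)} {t t' : E3}

namespace IsRASuspData

theorem isSpread_commonNeighbors (hL : IsLabeledS2 L m) (h : IsRASuspData L m T Z t t')
    (hinf : InfiniteBase Z) (hfull : IsFullSubcomplex L Z) :
    IsSpread (skeleton L) ((rightAngledGraph L m).commonNeighbors t t') := by
  obtain ⟨F, hF⟩ := h.znonempty
  obtain ⟨v, hv⟩ := L.nonempty_of_mem_faces (h.zsubset hF)
  rw [h.base_eq hfull] at hinf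
  exact ((infiniteBase_fullSubcomplex_iff (fun _ hw ↦ h.zsubset hw)
    ⟨v, h.singleton_mem_base hF hv⟩).1 hinf).mono (h.vertexSet_base_subset hL)

-- If the suspension points were adjacent, they would have exactly two common neighbors `a` and `b`,
-- and the suspension from `a` and `b` would properly contain the given one.
theorem not_adj (hL : IsLabeledS2 L m) (hflag : MetricFlag L m) (h : IsRASuspData L m T Z t t')
    (hspread : IsSpread (skeleton L) ((rightAngledGraph L m).commonNeighbors t t'))
    (hmax : ∀ T', IsRASusp L m T' → T ⊆ T' → T = T') : ¬ (skeleton L).Adj t t' := by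
  intro htt'
  have hadj {x : E3} (hx : x ∈ (rightAngledGraph L m).commonNeighbors t t') :
      (rightAngledGraph L m).Adj x t ∧ (rightAngledGraph L m).Adj x t' :=
    ⟨hx.1.symm, SimpleGraph.Adj.symm hx.2⟩
  have htri {x : E3} (hx : x ∈ (rightAngledGraph L m).commonNeighbors t t') :
      {x, t, t'} ∈ L.faces :=
    insert_pair_mem_faces hL hflag (hadj hx).1 (hadj hx).2 htt'
  obtain ⟨a, b, hab, hN⟩ | ⟨x, hinj, hx⟩ := hspread.exists_compl_adj_or_injective
  · have ha : a ∈ (rightAngledGraph L m).commonNeighbors t t' := hN ▸ by simp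
    have hb : b ∈ (rightAngledGraph L m).commonNeighbors t t' := hN ▸ by simp
    have ht : t ∈ (rightAngledGraph L m).commonNeighbors a b := mem_commonNeighbors_swap ha hb
    have hpoles : {t, t'} ⊆ (rightAngledGraph L m).commonNeighbors a b :=
      Set.pair_subset ht ⟨(hadj ha).2, (hadj hb).2⟩
    have hsub : suspension (rightAngledGraph L m) t t' ⊆ suspension (rightAngledGraph L m) a b := by
      rw [suspension, hN, Set.union_comm]
      exact Set.union_subset_union_right _ hpoles
    have hTeq := hmax _ ⟨_, a, b, isRASuspData_fullSubcomplex hL hflag hab ⟨t, ht⟩⟩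
      ((h.subset_fullSubcomplex hL).trans (fullSubcomplex_mono hsub))
    have hmem : {a, t, t'} ∈ T := by
      rw [hTeq]
      refine ⟨htri ha, ?_⟩
      simpa [Set.insert_subset_iff, left_mem_suspension] using
        hpoles.trans commonNeighbors_subset_suspension
    exact h.right_notMem hmem (by simp) (by simp)
  · exact false_of_three_triangles_on_edge hL.incidenceGraph_k33Free htt'.ne hinj
      (fun i ↦ (hadj (hx i)).1.ne) (fun i ↦ (hadj (hx i)).2.ne) fun i ↦ htri (hx i)

end IsRASuspData

namespace IsInfMaxRASusp

theorem exists_eq_fullSubcomplex (hL : IsLabeledS2 L m) (hflag : MetricFlag L m)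
    (h : IsInfMaxRASusp L m S) :
    ∃ t t', (skeleton L)ᶜ.Adj t t' ∧
      IsSpread (skeleton L) ((rightAngledGraph L m).commonNeighbors t t') ∧
      S = fullSubcomplex L (suspension (rightAngledGraph L m) t t') := by
  obtain ⟨⟨Z, t, t', hS, hinf, hfull⟩, hmax⟩ := h
  have hspread := hS.isSpread_commonNeighbors hL hinf hfull
  have htt' : (skeleton L)ᶜ.Adj t t' := ⟨hS.tne, hS.not_adj hL hflag hspread hmax⟩
  exact ⟨t, t', htt', hspread, hmax _
    ⟨_, t, t', isRASuspData_fullSubcomplex hL hflag htt' hspread.nonempty⟩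
    (hS.subset_fullSubcomplex hL)⟩

theorem isInfiniteSuspension (hL : IsLabeledS2 L m) (hflag : MetricFlag L m)
    (h : IsInfMaxRASusp L m S) :
    IsInfiniteSuspension (skeleton L) (rightAngledGraph L m) (vertexSet S) := by
  obtain ⟨t, t', htt', hspread, rfl⟩ := h.exists_eq_fullSubcomplex hL hflag
  exact ⟨t, t', htt', hspread,
    vertexSet_fullSubcomplex (suspension_subset_vertexSet hspread.nonempty)⟩

end IsInfMaxRASusp

theorem vertexSet_circuitComplex (v : Fin 4 → E3) :
    vertexSet (circuitComplex v) = {v 0, v 1, v 2, v 3} := by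
  ext x
  have hmem : x ∈ vertexSet (circuitComplex v) ↔ ∃ i, x = v i := by
    refine ⟨?_, fun ⟨i, hi⟩ ↦ .inl ⟨i, hi ▸ rfl⟩⟩
    rintro (⟨i, hi⟩ | ⟨i, hi⟩)
    · exact ⟨i, Finset.singleton_injective hi⟩
    · exact ⟨i, (Finset.mem_singleton.1 (hi ▸ by simp : v i ∈ {x})).symm⟩
  simp [hmem, Fin.exists_fin_succ]

theorem IsEuclidean4Circuit.fullSubcomplex_eq (hL : IsLabeledS2 L m) (hflag : MetricFlag L m)
    {v : Fin 4 → E3} (hv : IsEuclidean4Circuit L m v) :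
    fullSubcomplex L {v 0, v 1, v 2, v 3} = circuitComplex v := by
  have hsq := hv.isSquare hL hflag
  refine Set.Subset.antisymm (fun F hF ↦ ?_) ?_
  · have hne := L.nonempty_of_mem_faces hF.1
    have h02 : ¬ (v 0 ∈ F ∧ v 2 ∈ F) := fun ⟨h0, h2⟩ ↦
      hsq.compl_adj.2 (skeleton_adj_of_mem hF.1 h0 h2 hsq.compl_adj.1)
    have h13 : ¬ (v 1 ∈ F ∧ v 3 ∈ F) := fun ⟨h1, h3⟩ ↦
      hsq.compl_adj'.2 (skeleton_adj_of_mem hF.1 h1 h3 hsq.compl_adj'.1)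
    have hsub : ∀ x ∈ F, x = v 0 ∨ x = v 1 ∨ x = v 2 ∨ x = v 3 := fun x hx ↦ hF.2 hx
    obtain ⟨i, hi⟩ : ∃ i, F ⊆ {v i, v (i + 1)} := by
      have hcorners : F ⊆ {v 0, v 1} ∨ F ⊆ {v 1, v 2} ∨ F ⊆ {v 2, v 3} ∨ F ⊆ {v 3, v 0} := by
        by_cases h0 : v 0 ∈ F <;> by_cases h1 : v 1 ∈ F <;>
          [left; (right; right; right); (right; left); (right; right; left)] <;>
          intro x hx <;> have := hsub x hx <;> grind
      rcases hcorners with h | h | h | h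
      exacts [⟨0, h⟩, ⟨1, h⟩, ⟨2, h⟩, ⟨3, h⟩]
    have : F = {v i} ∨ F = {v (i + 1)} ∨ F = {v i, v (i + 1)} := by
      have := Finset.coe_subset.2 hi
      rw [Finset.coe_pair, Set.Nonempty.subset_pair_iff_eq (by simpa)] at this
      exact_mod_cast this
    rcases this with h | h | h
    exacts [.inl ⟨i, h⟩, .inl ⟨i + 1, h⟩, .inr ⟨i, h⟩]
  · rintro _ (⟨i, rfl⟩ | ⟨i, rfl⟩)
    · refine ⟨L.down_closed (hv.2.1 i) (by simp) (by simp), ?_⟩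
      fin_cases i <;> simp
    · refine ⟨hv.2.1 i, ?_⟩
      fin_cases i <;> simp [Set.insert_subset_iff]

theorem SeifertRel.meetInSquare (hL : IsLabeledS2 L m) (hflag : MetricFlag L m)
    (h : SeifertRel L m S S') :
    MeetInSquare (skeleton L) (rightAngledGraph L m) (vertexSet S) (vertexSet S') := by
  obtain ⟨hS, hS', v, hv, hinter⟩ := h
  refine ⟨hS.isInfiniteSuspension hL hflag, hS'.isInfiniteSuspension hL hflag, _, _, _, _,
    hv.isSquare hL hflag, ?_⟩
  rw [← vertexSet_circuitComplex, ← hinter]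
  rfl

instance : Std.Symm (SeifertRel L m) where
  symm S S' := fun ⟨hS, hS', v, hv, hinter⟩ ↦ ⟨hS', hS, v, hv, Set.inter_comm S S' ▸ hinter⟩

end MaximalSuspensions

section CrossingSuspensions

variable {E : Type*} [AddCommGroup E] [Module ℝ E] [DecidableEq E] {L : SimplicialComplex ℝ E}
  {R : SimpleGraph E} {a b c d u x y : E}

-- The triangle `{a, b, y}` together with the paths `d, u, b` and `c, x, a` gives a `K₃,₃`.
theorem false_of_crossing_paths (hK : K33Free (incidenceGraph L)) (hface : {a, b, y} ∈ L.faces)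
    (hac : y ∈ (skeleton L).commonNeighbors a c) (hbd : y ∈ (skeleton L).commonNeighbors b d)
    (hda : (skeleton L).Adj d a) (hcb : (skeleton L).Adj c b)
    (hx : x ∈ (skeleton L).commonNeighbors a c) (hu : u ∈ (skeleton L).commonNeighbors b d)
    (hnodup : [a, b, c, d, u, x, y].Nodup) : False := by
  have hpair {x y : E} (hxy : (skeleton L).Adj x y) : JoinedWithin (skeleton L) {x, y} x y :=
    .of_adj hxy (by simp) (by simp)
  have htriple {x y z : E} (hxy : (skeleton L).Adj x y) (hyz : (skeleton L).Adj y z) :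
      JoinedWithin (skeleton L) {x, y, z} x z :=
    .cons hxy (by simp) (.of_adj hyz (by simp) (by simp))
  simp only [List.nodup_cons, List.mem_cons, not_or, List.not_mem_nil, not_false_eq_true,
    List.nodup_nil, and_true] at hnodup
  refine false_of_two_cones_over_face hK (p := ![d, c]) (q := ![a, b, y])
    (B := ![![{d, a}, {d, u, b}, {d, y}], ![{c, x, a}, {c, b}, {c, y}]]) hface
    (fun j ↦ by fin_cases j <;> simp) ?_ ?_ ?_
  · intro i j
    fin_cases i <;> fin_cases j
    exacts [hpair hda, htriple hu.2 hu.1.symm, hpair hbd.2, htriple hx.2 hx.1.symm, hpair hcb,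
      hpair hac.2]
  · intro i i' j j' hi hj
    rw [Set.disjoint_left]
    fin_cases i <;> fin_cases i' <;> first | exact (hi rfl).elim | skip
    all_goals fin_cases j <;> fin_cases j' <;> first | exact (hj rfl).elim | skip
    all_goals simp only [Fin.zero_eta, Fin.mk_one, Fin.reduceFinMk, Matrix.cons_val,
      Set.mem_insert_iff, Set.mem_singleton_iff]; grind
  · intro i j j' hj
    fin_cases i <;> fin_cases j <;> fin_cases j' <;> first | exact (hj rfl).elim | skip
    all_goals simp only [Fin.zero_eta, Fin.mk_one, Fin.reduceFinMk, Matrix.cons_val,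
      Set.mem_insert_iff, Set.mem_singleton_iff]; grind

theorem IsSquare.suspension_subset_or_subset (hK : K33Free (incidenceGraph L))
    (hRG : R ≤ skeleton L) (h : IsSquare (skeleton L) R a b c d) (hface : {a, b, y} ∈ L.faces)
    (hac : y ∈ R.commonNeighbors a c) (hbd : y ∈ R.commonNeighbors b d) :
    suspension R a c ⊆ suspension R b d ∨ suspension R b d ⊆ suspension R a c := by
  by_contra! hnot
  obtain ⟨⟨x, hx, hx'⟩, u, hu, hu'⟩ := hnot.imp Set.not_subset.1 Set.not_subset.1
  have hoff {z : E} (hz : z ∈ suspension R b d) : x ≠ z := (ne_of_mem_of_not_mem hz hx').symm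
  have hoff' {z : E} (hz : z ∈ suspension R a c) : u ≠ z := (ne_of_mem_of_not_mem hz hu').symm
  have hxa := hoff (commonNeighbors_subset_suspension h.rotate.mem')
  have hxc := hoff (commonNeighbors_subset_suspension h.rotate.mem)
  have hub := hoff' (commonNeighbors_subset_suspension h.mem)
  have hud := hoff' (commonNeighbors_subset_suspension h.mem')
  have hxN := mem_commonNeighbors_of_mem_suspension hx hxa hxc
  have huN := mem_commonNeighbors_of_mem_suspension hu hub hud
  refine false_of_crossing_paths hK hface ⟨hRG hac.1, hRG hac.2⟩ ⟨hRG hbd.1, hRG hbd.2⟩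
    (hRG h.mem'.1.symm) (hRG h.mem.2) ⟨hRG hxN.1, hRG hxN.2⟩ ⟨hRG huN.1, hRG huN.2⟩ ?_
  simp only [List.nodup_cons, List.mem_cons, not_or, List.not_mem_nil, not_false_eq_true,
    List.nodup_nil, and_true]
  exact ⟨⟨h.mem.1.ne, h.compl_adj.ne, h.mem'.1.ne, (hoff' left_mem_suspension).symm, hxa.symm,
      hac.1.ne⟩,
    ⟨h.mem.2.ne', h.compl_adj'.ne, hub.symm, (hoff left_mem_suspension).symm, hbd.1.ne⟩,
    ⟨h.mem'.2.ne, (hoff' right_mem_suspension).symm, hxc.symm, hac.2.ne⟩,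
    ⟨hud.symm, (hoff right_mem_suspension).symm, hbd.2.ne⟩,
    ⟨hoff' hx, hoff' (commonNeighbors_subset_suspension hac)⟩,
    hoff (commonNeighbors_subset_suspension hbd)⟩

end CrossingSuspensions

/-! ### Switching to the other pair of opposite corners -/

section OppositeCorners

variable {L : SimplicialComplex ℝ E3} {m : E3 → E3 → ℕ} {S S' : Set (Finset E3)} {a b c d x : E3}

theorem IsSquare.isRASusp (hL : IsLabeledS2 L m) (hflag : MetricFlag L m)
    (h : IsSquare (skeleton L) (rightAngledGraph L m) a b c d) :
    IsRASusp L m (fullSubcomplex L (suspension (rightAngledGraph L m) a c)) :=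
  ⟨_, a, c, isRASuspData_fullSubcomplex hL hflag h.compl_adj ⟨b, h.mem⟩⟩

theorem IsSquare.disjoint_commonNeighbors (hL : IsLabeledS2 L m) (hflag : MetricFlag L m)
    (h : IsSquare (skeleton L) (rightAngledGraph L m) a b c d)
    (hbd : IsInfMaxRASusp L m (fullSubcomplex L (suspension (rightAngledGraph L m) b d)))
    (hnot : ¬ suspension (rightAngledGraph L m) a c ⊆ suspension (rightAngledGraph L m) b d) :
    Disjoint ((rightAngledGraph L m).commonNeighbors a c)
      ((rightAngledGraph L m).commonNeighbors b d) := by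
  refine Set.disjoint_left.2 fun y hac hbd' ↦ ?_
  have hface : {a, b, y} ∈ L.faces := insert_pair_mem_faces hL hflag h.mem.1 hac.1 hbd'.1.1
  have hsub := (h.suspension_subset_or_subset hL.incidenceGraph_k33Free
    rightAngledGraph_le_skeleton hface hac hbd').resolve_left hnot
  have heq := hbd.2 _ (h.isRASusp hL hflag) (fullSubcomplex_mono hsub)
  exact hnot ((fullSubcomplex_subset_iff (suspension_subset_vertexSet ⟨b, h.mem⟩)).1 heq.ge)

theorem IsSquare.isInfMaxRASusp (hL : IsLabeledS2 L m) (hflag : MetricFlag L m)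
    (h : IsSquare (skeleton L) (rightAngledGraph L m) a b c d)
    (hdisj : Disjoint ((rightAngledGraph L m).commonNeighbors a c)
      ((rightAngledGraph L m).commonNeighbors b d))
    (hnot : ¬ suspension (rightAngledGraph L m) a c ⊆ suspension (rightAngledGraph L m) b d) :
    IsInfMaxRASusp L m (fullSubcomplex L (suspension (rightAngledGraph L m) a c)) := by
  have hne : ((rightAngledGraph L m).commonNeighbors a c).Nonempty := ⟨b, h.mem⟩
  refine ⟨⟨_, a, c, isRASuspData_fullSubcomplex hL hflag h.compl_adj hne,
    (infiniteBase_fullSubcomplex_iff commonNeighbors_subset_vertexSet hne).2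
      (isSpread_of_compl_adj h.compl_adj' h.mem h.mem'), isFullSubcomplex_fullSubcomplex⟩, ?_⟩
  rintro T ⟨Z, p, p', hT⟩ hsub
  have hTp := hT.subset_fullSubcomplex hL
  have hacp : suspension (rightAngledGraph L m) a c ⊆ suspension (rightAngledGraph L m) p p' :=
    (fullSubcomplex_subset_iff (suspension_subset_vertexSet hne)).1 (hsub.trans hTp)
  rcases h.suspension_eq_or_subset_commonNeighbors rightAngledGraph_le_skeleton
    (h.subset_suspension.trans hacp) with heq | heq | hN
  · exact hsub.antisymm (heq ▸ hTp)
  · exact (hnot (heq ▸ hacp)).elim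
  · have hac : p ∈ (rightAngledGraph L m).commonNeighbors a c :=
      mem_commonNeighbors_swap (hN (by simp)) (hN (by simp))
    have hbd : p ∈ (rightAngledGraph L m).commonNeighbors b d :=
      mem_commonNeighbors_swap (hN (by simp)) (hN (by simp))
    exact (hdisj.notMem_of_mem_left hac hbd).elim

theorem IsEuclidean4Circuit.seifertRel (hL : IsLabeledS2 L m) (hflag : MetricFlag L m)
    {v : Fin 4 → E3} (hv : IsEuclidean4Circuit L m v)
    (hmax : IsInfMaxRASusp L m (fullSubcomplex L (suspension (rightAngledGraph L m) (v 1) (v 3))))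
    (hnot : ¬ suspension (rightAngledGraph L m) (v 0) (v 2) ⊆
      suspension (rightAngledGraph L m) (v 1) (v 3)) :
    SeifertRel L m (fullSubcomplex L (suspension (rightAngledGraph L m) (v 1) (v 3)))
      (fullSubcomplex L (suspension (rightAngledGraph L m) (v 0) (v 2))) := by
  have h := hv.isSquare hL hflag
  have hdisj := h.disjoint_commonNeighbors hL hflag hmax hnot
  refine ⟨hmax, h.isInfMaxRASusp hL hflag hdisj hnot, v, hv, ?_⟩
  rw [fullSubcomplex_inter, Set.inter_comm, h.suspension_inter hdisj,
    hv.fullSubcomplex_eq hL hflag]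

theorem IsInfMaxRASusp.of_reflTransGen (hS : IsInfMaxRASusp L m S)
    (h : Relation.ReflTransGen (SeifertRel L m) S S') : IsInfMaxRASusp L m S' := by
  obtain rfl | ⟨_, _, h⟩ := h.cases_tail
  exacts [hS, h.2.1]

theorem IsInfMaxRASusp.exists_reflTransGen_mem (hL : IsLabeledS2 L m) (hflag : MetricFlag L m)
    (hS : IsInfMaxRASusp L m S) {v : Fin 4 → E3} (hv : IsEuclidean4Circuit L m v)
    (hvS : {v 0, v 1, v 2, v 3} ⊆ vertexSet S)
    (hx : x ∈ suspension (rightAngledGraph L m) (v 0) (v 2)) :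
    ∃ S', Relation.ReflTransGen (SeifertRel L m) S S' ∧ x ∈ vertexSet S' := by
  have h := hv.isSquare hL hflag
  obtain ⟨t, t', htt', hspread, rfl⟩ := hS.exists_eq_fullSubcomplex hL hflag
  have htt'S := vertexSet_fullSubcomplex (suspension_subset_vertexSet hspread.nonempty)
  have h02 := vertexSet_fullSubcomplex (suspension_subset_vertexSet ⟨_, h.mem⟩)
  rw [htt'S] at hvS
  by_cases hxS : x ∈ suspension (rightAngledGraph L m) t t'
  · exact ⟨_, .refl, htt'S.ge hxS⟩
  rcases h.suspension_eq_or_subset_commonNeighbors rightAngledGraph_le_skeleton hvS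
    with heq | heq | hN
  · exact (hxS (heq ▸ hx)).elim
  · rw [heq] at hS hxS ⊢
    exact ⟨_, .single (hv.seifertRel hL hflag hS fun hsub ↦ hxS (hsub hx)), h02.ge hx⟩
  · rcases hx with (rfl | rfl) | hx
    · exact (hxS (hvS (by simp))).elim
    · exact (hxS (hvS (by simp))).elim
    · exact (hxS (h.mem_suspension_of_subset_commonNeighbors
        (skeleton_k33Free hL.incidenceGraph_k33Free) rightAngledGraph_le_skeleton htt' hN hx)).elim

end OppositeCorners

end CoxOrb

/-- Let `D` be a Seifert subcomplex of a metric flag labeled triangulation of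
the 2-sphere and let `C ⊆ D` be a Euclidean 4-circuit on the vertices
`v 0, v 1, v 2, v 3` in cyclic order.  If a vertex `x` of `L` is joined to the
opposite corners `v 0` and `v 2` by edges of `L` labeled `2`, then `x` is a
vertex of `D`. -/
theorem seifert_contains_suspended_vertex
    (L : SimplicialComplex ℝ E3) (m : E3 → E3 → ℕ)
    (hL : IsLabeledS2 L m) (hflag : MetricFlag L m)
    (D : Set (Finset E3)) (hD : IsSeifertSubcomplex L m D)
    (v : Fin 4 → E3) (hv : IsEuclidean4Circuit L m v)
    (hsub : circuitComplex v ⊆ D)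
    (x : E3) (hx : ({x} : Finset E3) ∈ L.faces)
    (hx0 : ({x, v 0} : Finset E3) ∈ L.faces)
    (hx2 : ({x, v 2} : Finset E3) ∈ L.faces)
    (hm0 : m x (v 0) = 2) (hm2 : m x (v 2) = 2) :
    ({x} : Finset E3) ∈ D := by
  obtain ⟨S₀, hS₀, rfl⟩ := hD
  have hsq := hv.isSquare hL hflag
  have hx' : x ∈ suspension (rightAngledGraph L m) (v 0) (v 2) := by
    by_cases h0 : x = v 0
    · exact h0 ▸ left_mem_suspension
    by_cases h2 : x = v 2
    · exact h2 ▸ right_mem_suspension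
    exact commonNeighbors_subset_suspension
      ⟨(hL.rightAngledGraph_adj h0 hx0 hm0).symm, (hL.rightAngledGraph_adj h2 hx2 hm2).symm⟩
  rw [Relation.EqvGen.eqvGen_eq_reflTransGen] at hsub ⊢
  obtain ⟨S, hS₀S, hvS⟩ := exists_square_subset (W := vertexSet) (r := SeifertRel L m) (i := S₀)
    (skeleton_k33Free hL.incidenceGraph_k33Free) rightAngledGraph_le_skeleton
    (skeleton_support_finite hL.finite) (fun _ _ h ↦ h.meetInSquare hL hflag) hsq <| by
      intro w hw
      obtain ⟨S, ⟨-, hS₀S⟩, hwS⟩ := hsub (vertexSet_circuitComplex v ▸ hw : w ∈ vertexSet _)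
      exact ⟨S, hS₀S, hwS⟩
  obtain ⟨S', hSS', hxS'⟩ :=
    (hS₀.of_reflTransGen hS₀S).exists_reflTransGen_mem hL hflag hv hvS hx'
  exact ⟨S', ⟨hS₀.of_reflTransGen (hS₀S.trans hSS'), hS₀S.trans hSS'⟩, hxS'⟩
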